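/- arXiv:math/0505399 — 3 statements merged into one kernel-verified Lean document; each statement's English description precedes it below -/
import Mathlib

section
/- Let φ : (0,∞) → ℂ be smooth and compactly supported in (0,∞), and let φ*(s) := ∫₀^∞ φ(y) y^{s−1} dy be its Mellin transform. Then for every a > 0, every t ∈ ℝ, every δ ∈ {−1, 1}, and every σ with 0 < σ < 1/2, the integral on the right-hand side converges absolutely and ∫₀^∞ φ(y) y^{−1−it} exp( −δ i a y^{−1/2} ) dy = (1/(π i)) ∫_{Re s = σ} φ*(s) Γ(2(s+it)) exp( −δ π i (s+it) ) a^{−2(s+it)} ds. -/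
open MeasureTheory Real

/-- The kernel of the Mellin–Barnes representation (4.25) of Jutila–Motohashi:
`φ*(s) Γ(2(s+it)) exp(−δπi(s+it)) a^{−2(s+it)}`. -/
noncomputable def mbKernel (φ : ℝ → ℂ) (a t δ : ℝ) (s : ℂ) : ℂ :=
  mellin φ s * Complex.Gamma (2 * (s + Complex.I * t)) *
    Complex.exp (-(δ : ℂ) * (π : ℂ) * Complex.I * (s + Complex.I * t)) *
    ((a : ℂ)) ^ (-2 * (s + Complex.I * t))

theorem integrableOn_rpow_mul_exp_neg_mul_Ioi {s b : ℝ} (hs : -1 < s) (hb : 0 < b) :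
    IntegrableOn (fun x : ℝ => x ^ s * Real.exp (-(b * x))) (Set.Ioi 0) := by
  have := integrableOn_rpow_mul_exp_neg_mul_rpow (p := 1) hs one_pos hb
  simpa [Real.rpow_one, neg_mul] using this

theorem norm_cpow_mul_exp_neg_mul {w r : ℂ} {x : ℝ} (hx : 0 < x) :
    ‖(x : ℂ) ^ w * Complex.exp (-(r * x))‖ = x ^ w.re * Real.exp (-(r.re * x)) := by
  rw [norm_mul, Complex.norm_cpow_eq_rpow_re_of_pos hx, Complex.norm_exp]
  simp

theorem integrableOn_cpow_mul_exp_neg_mul_Ioi {w r : ℂ} (hw : -1 < w.re) (hr : 0 < r.re) :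
    IntegrableOn (fun x : ℝ => (x : ℂ) ^ w * Complex.exp (-(r * x))) (Set.Ioi 0) := by
  refine (integrableOn_rpow_mul_exp_neg_mul_Ioi hw hr).mono' ?_ ?_
  · exact Measurable.aestronglyMeasurable (by fun_prop)
  · filter_upwards [ae_restrict_mem measurableSet_Ioi] with x hx
    exact (norm_cpow_mul_exp_neg_mul hx).le

theorem differentiableAt_integral_cpow_mul_exp_neg_mul_Ioi {w r : ℂ} (hw : 0 < w.re)
    (hr : 0 < r.re) :
    DifferentiableAt ℂ
      (fun r : ℂ => ∫ x : ℝ in Set.Ioi 0, (x : ℂ) ^ (w - 1) * Complex.exp (-(r * x))) r := by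
  have hball : ∀ z ∈ Metric.ball r (r.re / 2), r.re / 2 < z.re := by
    intro z hz
    have h1 := (Complex.abs_re_le_norm (z - r)).trans_lt (mem_ball_iff_norm.1 hz)
    rw [Complex.sub_re, abs_lt] at h1
    linarith [h1.1]
  refine (hasDerivAt_integral_of_dominated_loc_of_deriv_le
    (F' := fun z x => (x : ℂ) ^ (w - 1) * (Complex.exp (-(z * x)) * -x))
    (bound := fun x => x ^ w.re * Real.exp (-(r.re / 2 * x)))
    (Metric.ball_mem_nhds r (half_pos hr)) ?_ ?_ ?_ ?_ ?_ ?_).2.differentiableAt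
  · exact Filter.Eventually.of_forall fun z => Measurable.aestronglyMeasurable (by fun_prop)
  · exact integrableOn_cpow_mul_exp_neg_mul_Ioi (by simpa using hw) hr
  · exact Measurable.aestronglyMeasurable (by fun_prop)
  · filter_upwards [ae_restrict_mem measurableSet_Ioi] with x (hx : 0 < x) z hz
    rw [← mul_assoc, norm_mul, norm_cpow_mul_exp_neg_mul hx, norm_neg, Complex.norm_real,
      Real.norm_of_nonneg hx.le, mul_right_comm, Complex.sub_re, Complex.one_re,
      ← Real.rpow_add_one hx.ne', sub_add_cancel]
    gcongr
    exact (hball z hz).le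
  · exact integrableOn_rpow_mul_exp_neg_mul_Ioi (by linarith) (half_pos hr)
  · filter_upwards with x z _
    have h : HasDerivAt (fun z : ℂ => -(z * x)) (-x : ℂ) z := by
      simpa using! ((hasDerivAt_id z).mul_const (x : ℂ)).neg
    exact h.cexp.const_mul _

/-- The Gamma integral rotated into the right half-plane. -/
theorem integral_cpow_mul_exp_neg_mul_Ioi_of_re_pos {w r : ℂ} (hw : 0 < w.re) (hr : 0 < r.re) :
    ∫ x : ℝ in Set.Ioi 0, (x : ℂ) ^ (w - 1) * Complex.exp (-(r * x)) =
      r ^ (-w) * Complex.Gamma w := by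
  have hU : IsOpen {z : ℂ | 0 < z.re} := isOpen_lt continuous_const Complex.continuous_re
  have hf : AnalyticOnNhd ℂ
      (fun r : ℂ => ∫ x : ℝ in Set.Ioi 0, (x : ℂ) ^ (w - 1) * Complex.exp (-(r * x)))
      {z : ℂ | 0 < z.re} :=
    DifferentiableOn.analyticOnNhd (fun z hz =>
      (differentiableAt_integral_cpow_mul_exp_neg_mul_Ioi hw hz).differentiableWithinAt) hU
  have hg : AnalyticOnNhd ℂ (fun r : ℂ => r ^ (-w) * Complex.Gamma w) {z : ℂ | 0 < z.re} :=
    DifferentiableOn.analyticOnNhd (fun z hz =>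
      ((differentiableAt_id.cpow_const (Or.inl hz)).mul_const _).differentiableWithinAt) hU
  have hconn : IsPreconnected {z : ℂ | 0 < z.re} :=
    (convex_halfSpace_re_gt 0).isPreconnected
  refine hf.eqOn_of_preconnected_of_frequently_eq hg hconn (z₀ := 1) (by simp) ?_ hr
  have hreal : ∀ b : ℝ, 0 < b →
      ∫ x : ℝ in Set.Ioi 0, (x : ℂ) ^ (w - 1) * Complex.exp (-((b : ℂ) * x)) =
        (b : ℂ) ^ (-w) * Complex.Gamma w := by
    intro b hb
    rw [Complex.integral_cpow_mul_exp_neg_mul_Ioi hw hb, one_div, Complex.inv_cpow,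
      Complex.cpow_neg]
    rw [Complex.arg_ofReal_of_nonneg hb.le]
    exact pi_pos.ne
  have htend : Filter.Tendsto (fun b : ℝ => (b : ℂ)) (nhdsWithin 1 {1}ᶜ)
      (nhdsWithin 1 {1}ᶜ) := by
    refine tendsto_nhdsWithin_iff.2 ⟨?_, ?_⟩
    · have := (Complex.continuous_ofReal.tendsto 1).mono_left
        (nhdsWithin_le_nhds (s := {(1 : ℝ)}ᶜ))
      simpa using this
    · filter_upwards [self_mem_nhdsWithin] with b hb
      simpa using hb
  refine htend.frequently (Filter.Eventually.frequently ?_)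
  filter_upwards [nhdsWithin_le_nhds (Ioi_mem_nhds one_pos)] with b hb
  exact hreal b hb

theorem Complex.exp_ofReal_mul_I_cpow {θ : ℝ} (hθ : |θ| < π / 2) (w : ℂ) :
    Complex.exp (θ * Complex.I) ^ w = Complex.exp (θ * Complex.I * w) := by
  rw [Complex.cpow_def_of_ne_zero (Complex.exp_ne_zero _), Complex.log_exp]
  · simp; linarith [(abs_lt.1 hθ).1, pi_pos]
  · simp; linarith [(abs_lt.1 hθ).2, pi_pos]

theorem cos_pos_of_abs_lt {θ : ℝ} (hθ : |θ| < π / 2) : 0 < Real.cos θ :=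
  Real.cos_pos_of_mem_Ioo ⟨(abs_lt.1 hθ).1, (abs_lt.1 hθ).2⟩

theorem Complex.norm_Gamma_mul_exp_le {w : ℂ} (hw : 0 < w.re) {θ : ℝ} (hθ : |θ| < π / 2) :
    ‖Complex.Gamma w‖ * Real.exp (θ * w.im) ≤
      (1 / Real.cos θ) ^ w.re * Real.Gamma w.re := by
  have hcos := cos_pos_of_abs_lt hθ
  have hre : (Complex.exp (θ * Complex.I)).re = Real.cos θ := Complex.exp_ofReal_mul_I_re θ
  have h := integral_cpow_mul_exp_neg_mul_Ioi_of_re_pos hw (hre ▸ hcos)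
  have hnorm : ‖Complex.exp (θ * Complex.I) ^ (-w)‖ = Real.exp (θ * w.im) := by
    rw [Complex.exp_ofReal_mul_I_cpow hθ, Complex.norm_exp]
    simp
  rw [← hnorm, mul_comm, ← norm_mul, ← h, ← Real.integral_rpow_mul_exp_neg_mul_Ioi hw hcos]
  refine (norm_integral_le_integral_norm _).trans_eq
    (setIntegral_congr_fun measurableSet_Ioi fun x hx => ?_)
  simp only [norm_cpow_mul_exp_neg_mul hx, hre, Complex.sub_re, Complex.one_re]

/-- A weak form of Stirling's bound on vertical lines. -/
theorem Complex.norm_Gamma_mul_exp_pi_div_two_le {w : ℂ} (hw : 0 < w.re) :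
    ‖Complex.Gamma w‖ * Real.exp (π / 2 * |w.im|) ≤
      Real.exp 1 * (π / 2 * (1 + |w.im|)) ^ w.re * Real.Gamma w.re := by
  set T := 1 + |w.im| with hT
  have hT1 : 1 ≤ T := by simp [hT]
  have hT0 : 0 < T := by linarith
  have hTinv : T⁻¹ ≤ 1 := inv_le_one_of_one_le₀ hT1
  have hTinv0 : 0 < T⁻¹ := inv_pos.2 hT0
  have hpi := Real.pi_gt_three
  have hsin : (π / 2 * T)⁻¹ ≤ Real.sin T⁻¹ := by
    have := Real.mul_le_sin hTinv0.le (by linarith)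
    rwa [mul_inv, inv_div]
  have key : ∀ θ : ℝ, |θ| = π / 2 - T⁻¹ → θ * w.im = (π / 2 - T⁻¹) * |w.im| →
      ‖Complex.Gamma w‖ * Real.exp (π / 2 * |w.im|) ≤
      Real.exp 1 * (π / 2 * T) ^ w.re * Real.Gamma w.re := by
    intro θ hθ hθw
    have hcos : Real.cos θ = Real.sin T⁻¹ := by
      rw [← Real.cos_abs, hθ, Real.cos_pi_div_two_sub]
    have h := Complex.norm_Gamma_mul_exp_le hw (θ := θ) (by linarith)
    have hexp : Real.exp (π / 2 * |w.im|) ≤ Real.exp 1 * Real.exp (θ * w.im) := by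
      rw [← Real.exp_add, Real.exp_le_exp, hθw]
      have : T⁻¹ * |w.im| ≤ 1 := by
        rw [inv_mul_le_iff₀ hT0]; simp [hT]
      linarith
    have hΓ : 0 < Real.Gamma w.re := Real.Gamma_pos_of_pos hw
    have hle : 1 / Real.cos θ ≤ π / 2 * T := by
      rw [hcos, one_div]
      exact inv_le_of_inv_le₀ (by positivity) hsin
    have hc : 0 ≤ 1 / Real.cos θ := by
      rw [hcos, one_div]
      exact inv_nonneg.2 (le_trans (by positivity) hsin)
    calc ‖Complex.Gamma w‖ * Real.exp (π / 2 * |w.im|)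
        ≤ ‖Complex.Gamma w‖ * (Real.exp 1 * Real.exp (θ * w.im)) := by gcongr
      _ = Real.exp 1 * (‖Complex.Gamma w‖ * Real.exp (θ * w.im)) := by ring
      _ ≤ Real.exp 1 * ((1 / Real.cos θ) ^ w.re * Real.Gamma w.re) := by gcongr
      _ ≤ Real.exp 1 * ((π / 2 * T) ^ w.re * Real.Gamma w.re) := by gcongr
      _ = _ := by ring
  have hnn : 0 ≤ π / 2 - T⁻¹ := by linarith
  rcases le_total 0 w.im with h | h
  · exact key (π / 2 - T⁻¹) (abs_of_nonneg hnn) (by rw [abs_of_nonneg h])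
  · exact key (-(π / 2 - T⁻¹)) (by rw [abs_neg, abs_of_nonneg hnn])
      (by rw [abs_of_nonpos h]; ring)

theorem hasMellin_exp_neg_mul {w r : ℂ} (hw : 0 < w.re) (hr : 0 < r.re) :
    HasMellin (fun x : ℝ => Complex.exp (-(r * x))) w (r ^ (-w) * Complex.Gamma w) :=
  ⟨integrableOn_cpow_mul_exp_neg_mul_Ioi (by simpa using hw) hr,
    integral_cpow_mul_exp_neg_mul_Ioi_of_re_pos hw hr⟩

theorem hasMellin_exp_neg_mul_rpow_neg_half {z r : ℂ} (hz : 0 < z.re) (hr : 0 < r.re) :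
    HasMellin (fun y : ℝ => Complex.exp (-(r * (y ^ (-(1 / 2) : ℝ) : ℝ)))) (-z)
      (2 * (r ^ (-(2 * z)) * Complex.Gamma (2 * z))) := by
  have hdiv : -z / ((-(1 / 2) : ℝ) : ℂ) = 2 * z := by
    push_cast
    field_simp
  have h := hasMellin_exp_neg_mul (w := 2 * z) (by simpa using hz) hr
  refine ⟨?_, ?_⟩
  · rw [MellinConvergent.comp_rpow (f := fun x : ℝ => Complex.exp (-(r * x)))
      (by norm_num : (-(1 / 2) : ℝ) ≠ 0), hdiv]
    exact h.1
  · rw [mellin_comp_rpow (fun x : ℝ => Complex.exp (-(r * x))), hdiv, h.2]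
    norm_num [abs_of_pos, Complex.real_smul]

/-- The Mellin–Parseval formula for `exp (-r y ^ (-1/2))` with `0 < r.re`. -/
theorem integral_mul_exp_neg_mul_rpow_neg_half {φ : ℝ → ℂ} {σ : ℝ} (hφ : Continuous φ)
    (hconv : MellinConvergent φ σ) (hint : Complex.VerticalIntegrable (mellin φ) σ)
    (hσ : 0 < σ) (t : ℝ) {r : ℂ} (hr : 0 < r.re) :
    ∫ y in Set.Ioi (0 : ℝ), φ y * (y : ℂ) ^ (-1 - Complex.I * t) *
        Complex.exp (-(r * (y ^ (-(1 / 2) : ℝ) : ℝ))) =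
      1 / π * ∫ u : ℝ, mellin φ (σ + u * Complex.I) *
        (r ^ (-(2 * (σ + u * Complex.I + Complex.I * t))) *
          Complex.Gamma (2 * (σ + u * Complex.I + Complex.I * t))) := by
  set E : ℝ → ℂ := fun y => Complex.exp (-(r * (y ^ (-(1 / 2) : ℝ) : ℝ))) with hE
  have hEm : Measurable E := by fun_prop
  have hre : ∀ u : ℝ, (σ + u * Complex.I + Complex.I * t).re = σ := by intro u; simp
  have hmel := fun u : ℝ => hasMellin_exp_neg_mul_rpow_neg_half
    (z := σ + u * Complex.I + Complex.I * t) (by rwa [hre u]) hr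
  set F : ℝ → ℝ → ℂ := fun y u => mellin φ (σ + u * Complex.I) *
    ((y : ℂ) ^ (-(σ + u * Complex.I + Complex.I * t) - 1) * E y) with hF
  have hFint : Integrable (Function.uncurry F)
      ((volume.restrict (Set.Ioi (0 : ℝ))).prod (volume : Measure ℝ)) := by
    have hdom := Integrable.mul_prod (Integrable.norm (hmel 0).1) (Integrable.norm hint)
    refine hdom.mono' ?_ ?_
    · refine AEStronglyMeasurable.mul
        (hint.aestronglyMeasurable.comp_snd (μ := volume.restrict (Set.Ioi (0 : ℝ)))) ?_
      exact Measurable.aestronglyMeasurable (by fun_prop)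
    · filter_upwards [Measure.quasiMeasurePreserving_fst.ae
        (ae_restrict_mem (measurableSet_Ioi (a := (0 : ℝ))))] with p hp
      have hp : 0 < p.1 := hp
      simp only [Function.uncurry, hF, norm_mul, smul_eq_mul,
        Complex.norm_cpow_eq_rpow_re_of_pos hp, Complex.sub_re, Complex.neg_re, hre]
      exact (mul_comm _ _).le
  have hleft : ∀ y ∈ Set.Ioi (0 : ℝ), φ y * (y : ℂ) ^ (-1 - Complex.I * t) * E y =
      1 / (2 * π) * ∫ u : ℝ, F y u := by
    intro y hy
    have hy0 : (y : ℂ) ≠ 0 := Complex.ofReal_ne_zero.2 (ne_of_gt hy)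
    nth_rewrite 1 [← mellinInv_mellin_eq σ φ hy hconv hint hφ.continuousAt]
    rw [mellinInv, Complex.real_smul, mul_assoc, mul_assoc, ← integral_mul_const]
    push_cast
    congr 2 with u
    have : -(σ + u * Complex.I + Complex.I * t) - 1 =
        -(σ + u * Complex.I) + (-1 - Complex.I * t) := by ring
    simp only [hF, this, Complex.cpow_add _ _ hy0, smul_eq_mul]
    ring
  rw [setIntegral_congr_fun measurableSet_Ioi hleft, integral_const_mul,
    integral_integral_swap hFint]
  have hinner : ∀ u : ℝ, ∫ y in Set.Ioi (0 : ℝ), F y u = 2 * (mellin φ (σ + u * Complex.I) *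
        (r ^ (-(2 * (σ + u * Complex.I + Complex.I * t))) *
          Complex.Gamma (2 * (σ + u * Complex.I + Complex.I * t)))) := by
    intro u
    have h := (hmel u).2
    rw [mellin] at h
    simp only [smul_eq_mul] at h
    rw [integral_const_mul, h]
    ring
  simp_rw [hinner]
  rw [integral_const_mul, ← mul_assoc]
  congr 1
  field_simp

theorem mellinConvergent_of_hasCompactSupport {φ : ℝ → ℂ} (hφ : Continuous φ)
    (hcs : HasCompactSupport φ) (hsupp : tsupport φ ⊆ Set.Ioi 0) (s : ℂ) :
    MellinConvergent φ s := by
  refine mellinConvergent_of_isBigO_rpow (a := s.re + 1) (b := s.re - 1)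
    (hφ.locallyIntegrable.locallyIntegrableOn _) ?_ (by linarith) ?_ (by linarith)
  · have h : φ =ᶠ[Filter.atTop] 0 :=
      (hasCompactSupport_iff_eventuallyEq.1 hcs).filter_mono
        (atTop_le_cocompact.trans_eq Filter.coclosedCompact_eq_cocompact.symm)
    exact h.trans_isBigO (Asymptotics.isBigO_zero _ _)
  · have h0 : (0 : ℝ) ∉ tsupport φ := fun h => lt_irrefl _ (Set.mem_Ioi.1 (hsupp h))
    have h : φ =ᶠ[nhdsWithin 0 (Set.Ioi 0)] 0 :=
      (notMem_tsupport_iff_eventuallyEq.1 h0).filter_mono nhdsWithin_le_nhds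
    exact h.trans_isBigO (Asymptotics.isBigO_zero _ _)

theorem exists_schwartzMap_mellin_eq {φ : ℝ → ℂ} (hφ : ContDiff ℝ (⊤ : ℕ∞) φ)
    (hcs : HasCompactSupport φ) (hsupp : tsupport φ ⊆ Set.Ioi 0) (σ : ℝ) :
    ∃ g : SchwartzMap ℝ ℂ, ∀ u : ℝ, mellin φ (σ + u * Complex.I) = g (u / (2 * π)) := by
  set f : ℝ → ℂ := fun u => Real.exp (-σ * u) • φ (Real.exp (-u)) with hf
  have hfs : ContDiff ℝ (⊤ : ℕ∞) f := by fun_prop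
  have hfc : HasCompactSupport f := by
    refine HasCompactSupport.intro (K := (fun y => -Real.log y) '' tsupport φ) ?_ ?_
    · refine hcs.isCompact.image_of_continuousOn fun y hy => ?_
      exact (Real.continuousAt_log (ne_of_gt (hsupp hy))).neg.continuousWithinAt
    · intro u hu
      by_cases h : φ (Real.exp (-u)) = 0
      · simp [hf, h]
      · exact absurd ⟨Real.exp (-u), subset_tsupport _ h, by simp⟩ hu
  refine ⟨FourierTransform.fourier (hfc.toSchwartzMap hfs), fun u => ?_⟩
  rw [mellin_eq_fourier, SchwartzMap.fourier_coe]
  simp [hf]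
  rfl

theorem continuous_mellin_vertical {φ : ℝ → ℂ} (hφ : ContDiff ℝ (⊤ : ℕ∞) φ)
    (hcs : HasCompactSupport φ) (hsupp : tsupport φ ⊆ Set.Ioi 0) (σ : ℝ) :
    Continuous fun u : ℝ => mellin φ (σ + u * Complex.I) := by
  obtain ⟨g, hg⟩ := exists_schwartzMap_mellin_eq hφ hcs hsupp σ
  simp_rw [hg]
  exact g.continuous.comp (continuous_id.div_const _)

theorem integrable_pow_mul_norm_mellin_vertical {φ : ℝ → ℂ} (hφ : ContDiff ℝ (⊤ : ℕ∞) φ)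
    (hcs : HasCompactSupport φ) (hsupp : tsupport φ ⊆ Set.Ioi 0) (σ : ℝ) (k : ℕ) :
    Integrable fun u : ℝ => |u| ^ k * ‖mellin φ (σ + u * Complex.I)‖ := by
  obtain ⟨g, hg⟩ := exists_schwartzMap_mellin_eq hφ hcs hsupp σ
  have h := ((g.integrable_pow_mul volume k).comp_div (R := 2 * π) (by positivity)).const_mul
    ((2 * π) ^ k)
  refine h.congr (Filter.Eventually.of_forall fun u => ?_)
  simp only [hg, Real.norm_eq_abs, abs_div, div_pow, abs_of_pos Real.two_pi_pos]
  field_simp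

theorem verticalIntegrable_mellin {φ : ℝ → ℂ} (hφ : ContDiff ℝ (⊤ : ℕ∞) φ)
    (hcs : HasCompactSupport φ) (hsupp : tsupport φ ⊆ Set.Ioi 0) (σ : ℝ) :
    Complex.VerticalIntegrable (mellin φ) σ := by
  refine (integrable_norm_iff
    (continuous_mellin_vertical hφ hcs hsupp σ).aestronglyMeasurable).1 ?_
  simpa using integrable_pow_mul_norm_mellin_vertical hφ hcs hsupp σ 0

/-- `mbKernel` with `δπ/2` replaced by an arbitrary angle `θ`. -/
noncomputable def rotatedKernel (φ : ℝ → ℂ) (a t θ : ℝ) (s : ℂ) : ℂ :=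
  mellin φ s * Complex.Gamma (2 * (s + Complex.I * t)) *
    Complex.exp (-(θ * Complex.I * (2 * (s + Complex.I * t)))) *
    ((a : ℂ)) ^ (-2 * (s + Complex.I * t))

theorem rotatedKernel_mul_pi_div_two (φ : ℝ → ℂ) (a t δ : ℝ) (s : ℂ) :
    rotatedKernel φ a t (δ * (π / 2)) s = mbKernel φ a t δ s := by
  rw [rotatedKernel, mbKernel]
  congr 3
  push_cast
  ring

theorem continuous_rotatedKernel {φ : ℝ → ℂ} {σ : ℝ} (hσ : 0 < σ) {a : ℝ} (ha : 0 < a) (t θ : ℝ)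
    (hm : Continuous fun u : ℝ => mellin φ (σ + u * Complex.I)) :
    Continuous fun u : ℝ => rotatedKernel φ a t θ (σ + u * Complex.I) := by
  have hΓ : Continuous fun u : ℝ =>
      Complex.Gamma (2 * (σ + u * Complex.I + Complex.I * t)) := by
    refine continuous_iff_continuousAt.2 fun u => ?_
    refine ContinuousAt.comp (g := Complex.Gamma)
      (Complex.differentiableAt_Gamma _ fun m h => ?_).continuousAt (by fun_prop)
    have := congrArg Complex.re h
    simp at this
    linarith [(Nat.cast_nonneg m : (0 : ℝ) ≤ m)]
  have ha' : (a : ℂ) ≠ 0 := Complex.ofReal_ne_zero.2 ha.ne'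
  unfold rotatedKernel
  refine ((hm.mul hΓ).mul (by fun_prop)).mul ?_
  exact Continuous.const_cpow (by fun_prop) (Or.inl ha')

theorem norm_rotatedKernel_le (φ : ℝ → ℂ) {σ : ℝ} (hσ0 : 0 < σ) (hσ : σ ≤ 1 / 2) {a : ℝ}
    (ha : 0 < a) (t : ℝ) {θ : ℝ} (hθ : |θ| ≤ π / 2) (u : ℝ) :
    ‖rotatedKernel φ a t θ (σ + u * Complex.I)‖ ≤
      Real.exp 1 * Real.Gamma (2 * σ) * (π / 2) * a ^ (-2 * σ) *
        ((1 + 2 * |t|) * (|u| ^ 0 * ‖mellin φ (σ + u * Complex.I)‖) +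
          2 * (|u| ^ 1 * ‖mellin φ (σ + u * Complex.I)‖)) := by
  set w : ℂ := 2 * (σ + u * Complex.I + Complex.I * t) with hw
  have hwre : w.re = 2 * σ := by simp [hw]
  have hwim : w.im = 2 * (u + t) := by simp [hw]
  have hΓ := Complex.norm_Gamma_mul_exp_pi_div_two_le (w := w) (by rw [hwre]; linarith)
  have hexp : ‖Complex.exp (-(θ * Complex.I * w))‖ ≤ Real.exp (π / 2 * |w.im|) := by
    rw [Complex.norm_exp, Real.exp_le_exp]
    have : (-(θ * Complex.I * w)).re = θ * w.im := by simp
    rw [this]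
    calc θ * w.im ≤ |θ * w.im| := le_abs_self _
      _ = |θ| * |w.im| := abs_mul _ _
      _ ≤ _ := by gcongr
  have hapow : ‖(a : ℂ) ^ (-2 * (σ + u * Complex.I + Complex.I * t))‖ = a ^ (-2 * σ) := by
    rw [Complex.norm_cpow_eq_rpow_re_of_pos ha]
    simp
  have hΓpos : 0 < Real.Gamma (2 * σ) := Real.Gamma_pos_of_pos (by linarith)
  have habs : |w.im| ≤ 2 * |u| + 2 * |t| := by
    rw [hwim, abs_mul, abs_two]
    linarith [abs_add_le u t]
  have hbase : (π / 2 * (1 + |w.im|)) ^ w.re ≤ π / 2 * (1 + 2 * |t| + 2 * |u|) := by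
    have h1 : 1 ≤ π / 2 * (1 + |w.im|) := by
      nlinarith [Real.pi_gt_three, abs_nonneg w.im]
    calc (π / 2 * (1 + |w.im|)) ^ w.re ≤ (π / 2 * (1 + |w.im|)) ^ (1 : ℝ) :=
          Real.rpow_le_rpow_of_exponent_le h1 (by rw [hwre]; linarith)
      _ = π / 2 * (1 + |w.im|) := Real.rpow_one _
      _ ≤ _ := by
        rw [add_assoc]
        gcongr
        linarith
  rw [rotatedKernel, norm_mul, norm_mul, norm_mul, hapow, mul_assoc ‖mellin φ _‖]
  calc ‖mellin φ (σ + u * Complex.I)‖ *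
        (‖Complex.Gamma w‖ * ‖Complex.exp (-(θ * Complex.I * w))‖) * a ^ (-2 * σ)
      ≤ ‖mellin φ (σ + u * Complex.I)‖ *
        (‖Complex.Gamma w‖ * Real.exp (π / 2 * |w.im|)) * a ^ (-2 * σ) := by gcongr
    _ ≤ ‖mellin φ (σ + u * Complex.I)‖ * (Real.exp 1 * (π / 2 * (1 + |w.im|)) ^ w.re *
          Real.Gamma w.re) * a ^ (-2 * σ) := by gcongr
    _ ≤ ‖mellin φ (σ + u * Complex.I)‖ * (Real.exp 1 * (π / 2 * (1 + 2 * |t| + 2 * |u|)) *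
          Real.Gamma (2 * σ)) * a ^ (-2 * σ) := by
        rw [← hwre] at hΓpos ⊢
        gcongr
    _ = _ := by ring

theorem integral_mul_exp_neg_rotated {φ : ℝ → ℂ} {σ : ℝ} (hφ : Continuous φ)
    (hconv : MellinConvergent φ σ) (hint : Complex.VerticalIntegrable (mellin φ) σ)
    (hσ : 0 < σ) {a : ℝ} (ha : 0 < a) (t : ℝ) {θ : ℝ} (hθ : |θ| < π / 2) :
    ∫ y in Set.Ioi (0 : ℝ), φ y * (y : ℂ) ^ (-1 - Complex.I * t) *
        Complex.exp (-(a * Complex.exp (θ * Complex.I) * (y ^ (-(1 / 2) : ℝ) : ℝ))) =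
      1 / π * ∫ u : ℝ, rotatedKernel φ a t θ (σ + u * Complex.I) := by
  have hexp0 := Complex.exp_ne_zero (θ * Complex.I)
  have hr : 0 < (a * Complex.exp (θ * Complex.I)).re := by
    rw [Complex.re_ofReal_mul, Complex.exp_ofReal_mul_I_re]
    exact mul_pos ha (cos_pos_of_abs_lt hθ)
  have ha' : (a : ℂ) ≠ 0 := Complex.ofReal_ne_zero.2 ha.ne'
  rw [integral_mul_exp_neg_mul_rpow_neg_half hφ hconv hint hσ t hr]
  congr 2 with u
  have hpow : ∀ w : ℂ, (a * Complex.exp (θ * Complex.I)) ^ w =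
      (a : ℂ) ^ w * Complex.exp (θ * Complex.I * w) := by
    intro w
    rw [← Complex.exp_ofReal_mul_I_cpow hθ, Complex.cpow_def_of_ne_zero (mul_ne_zero ha' hexp0),
      Complex.log_ofReal_mul ha hexp0, add_mul, Complex.exp_add,
      Complex.cpow_def_of_ne_zero ha', Complex.cpow_def_of_ne_zero hexp0, Complex.ofReal_log ha.le]
  rw [hpow, rotatedKernel, mul_neg, neg_mul]
  ring

theorem tendsto_integral_mul_exp_neg_rotated {φ : ℝ → ℂ} (hφ : Continuous φ)
    (hconv : MellinConvergent φ 0) {a : ℝ} (ha : 0 < a) (t : ℝ) {l : Filter ℝ}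
    [l.IsCountablyGenerated] {θ₀ : ℝ} (hl : l ≤ nhds θ₀) (hcos : ∀ᶠ θ in l, 0 ≤ Real.cos θ) :
    Filter.Tendsto (fun θ : ℝ => ∫ y in Set.Ioi (0 : ℝ), φ y * (y : ℂ) ^ (-1 - Complex.I * t) *
        Complex.exp (-(a * Complex.exp (θ * Complex.I) * (y ^ (-(1 / 2) : ℝ) : ℝ)))) l
      (nhds (∫ y in Set.Ioi (0 : ℝ), φ y * (y : ℂ) ^ (-1 - Complex.I * t) *
        Complex.exp (-(a * Complex.exp (θ₀ * Complex.I) * (y ^ (-(1 / 2) : ℝ) : ℝ))))) := by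
  have hφm := hφ.measurable
  refine tendsto_integral_filter_of_dominated_convergence _ ?_ ?_ hconv.norm ?_
  · exact Filter.Eventually.of_forall fun θ => Measurable.aestronglyMeasurable (by fun_prop)
  · filter_upwards [hcos] with θ hθ
    filter_upwards [ae_restrict_mem measurableSet_Ioi] with y (hy : 0 < y)
    have hexp : ‖Complex.exp
        (-(a * Complex.exp (θ * Complex.I) * (y ^ (-(1 / 2) : ℝ) : ℝ)))‖ ≤ 1 := by
      rw [Complex.norm_exp, Real.exp_le_one_iff, Complex.neg_re, Complex.re_mul_ofReal,
        Complex.re_ofReal_mul, Complex.exp_ofReal_mul_I_re, neg_nonpos]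
      positivity
    have hpow : ‖(y : ℂ) ^ (-1 - Complex.I * t)‖ = ‖(y : ℂ) ^ ((0 : ℂ) - 1)‖ := by
      simp only [Complex.norm_cpow_eq_rpow_re_of_pos hy]
      simp
    rw [norm_mul, norm_mul, hpow, smul_eq_mul, norm_mul, mul_comm ‖φ y‖]
    exact mul_le_of_le_one_right (by positivity) hexp
  · refine Filter.Eventually.of_forall fun y => Filter.Tendsto.mono_left ?_ hl
    exact Continuous.tendsto (by fun_prop) θ₀

theorem exists_integrable_norm_rotatedKernel_le {φ : ℝ → ℂ} (hφ : ContDiff ℝ (⊤ : ℕ∞) φ)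
    (hcs : HasCompactSupport φ) (hsupp : tsupport φ ⊆ Set.Ioi 0) {σ : ℝ} (hσ0 : 0 < σ)
    (hσ : σ ≤ 1 / 2) {a : ℝ} (ha : 0 < a) (t : ℝ) :
    ∃ b : ℝ → ℝ, Integrable b ∧ ∀ θ : ℝ, |θ| ≤ π / 2 → ∀ u : ℝ,
      ‖rotatedKernel φ a t θ (σ + u * Complex.I)‖ ≤ b u := by
  have hint := integrable_pow_mul_norm_mellin_vertical hφ hcs hsupp σ
  exact ⟨_, (((hint 0).const_mul _).add ((hint 1).const_mul _)).const_mul _,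
    fun θ hθ => norm_rotatedKernel_le φ hσ0 hσ ha t hθ⟩

theorem tendsto_integral_rotatedKernel {φ : ℝ → ℂ} (hφ : ContDiff ℝ (⊤ : ℕ∞) φ)
    (hcs : HasCompactSupport φ) (hsupp : tsupport φ ⊆ Set.Ioi 0) {σ : ℝ} (hσ0 : 0 < σ)
    (hσ : σ ≤ 1 / 2) {a : ℝ} (ha : 0 < a) (t : ℝ) {l : Filter ℝ} [l.IsCountablyGenerated]
    {θ₀ : ℝ} (hl : l ≤ nhds θ₀) (habs : ∀ᶠ θ in l, |θ| ≤ π / 2) :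
    Filter.Tendsto (fun θ : ℝ => ∫ u : ℝ, rotatedKernel φ a t θ (σ + u * Complex.I)) l
      (nhds (∫ u : ℝ, rotatedKernel φ a t θ₀ (σ + u * Complex.I))) := by
  have hm := continuous_mellin_vertical hφ hcs hsupp σ
  obtain ⟨b, hb, hle⟩ := exists_integrable_norm_rotatedKernel_le hφ hcs hsupp hσ0 hσ ha t
  refine tendsto_integral_filter_of_dominated_convergence b ?_ ?_ hb ?_
  · exact Filter.Eventually.of_forall fun θ =>
      (continuous_rotatedKernel hσ0 ha t θ hm).aestronglyMeasurable
  · filter_upwards [habs] with θ hθ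
    exact Filter.Eventually.of_forall (hle θ hθ)
  · refine Filter.Eventually.of_forall fun u => Filter.Tendsto.mono_left ?_ hl
    unfold rotatedKernel
    exact Continuous.tendsto (by fun_prop) θ₀

theorem integrable_rotatedKernel {φ : ℝ → ℂ} (hφ : ContDiff ℝ (⊤ : ℕ∞) φ)
    (hcs : HasCompactSupport φ) (hsupp : tsupport φ ⊆ Set.Ioi 0) {σ : ℝ} (hσ0 : 0 < σ)
    (hσ : σ ≤ 1 / 2) {a : ℝ} (ha : 0 < a) (t : ℝ) {θ : ℝ} (hθ : |θ| ≤ π / 2) :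
    Integrable fun u : ℝ => rotatedKernel φ a t θ (σ + u * Complex.I) := by
  obtain ⟨b, hb, hle⟩ := exists_integrable_norm_rotatedKernel_le hφ hcs hsupp hσ0 hσ ha t
  exact hb.mono' (continuous_rotatedKernel hσ0 ha t θ
    (continuous_mellin_vertical hφ hcs hsupp σ)).aestronglyMeasurable
    (Filter.Eventually.of_forall (hle θ hθ))

/-- The Mellin–Barnes evaluation (4.24)–(4.25) of Jutila–Motohashi:
`∫₀^∞ φ(y) y^{−1−it} e^{−δia/√y} dy
  = (1/(πi)) ∫_{Re s = σ} φ*(s) Γ(2(s+it)) e^{−δπi(s+it)} a^{−2(s+it)} ds`,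
the right-hand side converging absolutely. -/
theorem stmt_7 (φ : ℝ → ℂ) (hφ : ContDiff ℝ (⊤ : ℕ∞) φ) (hcs : HasCompactSupport φ)
    (hsupp : tsupport φ ⊆ Set.Ioi 0)
    (a t δ σ : ℝ) (ha : 0 < a) (hδ : δ = 1 ∨ δ = -1) (hσ0 : 0 < σ) (hσ : σ < 1 / 2) :
    Integrable (fun u : ℝ => mbKernel φ a t δ (σ + u * Complex.I)) ∧
    ∫ y in Set.Ioi (0 : ℝ), φ y * (y : ℂ) ^ (-1 - Complex.I * t) *
        Complex.exp (-(δ : ℂ) * Complex.I * a / (Real.sqrt y : ℂ)) =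
      (1 / ((π : ℂ) * Complex.I)) *
        ∫ u : ℝ, mbKernel φ a t δ (σ + u * Complex.I) * Complex.I := by
  have hδabs : |δ| = 1 := by rcases hδ with rfl | rfl <;> simp
  have hexpδ : Complex.exp ((δ * (π / 2) : ℝ) * Complex.I) = δ * Complex.I := by
    rcases hδ with rfl | rfl
    · push_cast
      rw [one_mul, one_mul, Complex.exp_pi_div_two_mul_I]
    · push_cast
      rw [neg_one_mul, neg_mul, Complex.exp_neg, Complex.exp_pi_div_two_mul_I, Complex.inv_I,
        neg_one_mul]
  have hK : (fun u : ℝ => mbKernel φ a t δ (σ + u * Complex.I)) =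
      fun u : ℝ => rotatedKernel φ a t (δ * (π / 2)) (σ + u * Complex.I) :=
    funext fun u => (rotatedKernel_mul_pi_div_two φ a t δ _).symm
  have hθ₀ : |δ * (π / 2)| ≤ π / 2 := by
    rw [abs_mul, hδabs, one_mul, abs_of_pos Real.pi_div_two_pos]
  rw [integral_mul_const, hK]
  refine ⟨integrable_rotatedKernel hφ hcs hsupp hσ0 hσ.le ha t hθ₀, ?_⟩
  set l : Filter ℝ := nhdsWithin (δ * (π / 2)) (Set.Ioo (-(π / 2)) (π / 2)) with hldef
  have hl : l ≤ nhds (δ * (π / 2)) := nhdsWithin_le_nhds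
  have hmem : ∀ᶠ θ in l, |θ| < π / 2 := by
    filter_upwards [self_mem_nhdsWithin] with θ hθ
    exact abs_lt.2 hθ
  have : l.NeBot := by
    rw [hldef, ← mem_closure_iff_nhdsWithin_neBot,
      closure_Ioo (by linarith [Real.pi_pos] : -(π / 2) < π / 2).ne]
    exact abs_le.1 hθ₀
  have hL := tendsto_integral_mul_exp_neg_rotated hφ.continuous
    (mellinConvergent_of_hasCompactSupport hφ.continuous hcs hsupp 0) ha t hl
    (hmem.mono fun θ hθ => (cos_pos_of_abs_lt hθ).le)
  have hR := (tendsto_integral_rotatedKernel hφ hcs hsupp hσ0 hσ.le ha t hl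
    (hmem.mono fun θ hθ => hθ.le)).const_mul (1 / (π : ℂ))
  have hLR := tendsto_nhds_unique (hL.congr' (hmem.mono fun θ hθ =>
    integral_mul_exp_neg_rotated hφ.continuous
      (mellinConvergent_of_hasCompactSupport hφ.continuous hcs hsupp σ)
      (verticalIntegrable_mellin hφ hcs hsupp σ) hσ0 ha t hθ)) hR
  have hfun : ∀ y ∈ Set.Ioi (0 : ℝ), φ y * (y : ℂ) ^ (-1 - Complex.I * t) *
      Complex.exp (-(δ : ℂ) * Complex.I * a / (Real.sqrt y : ℂ)) =
      φ y * (y : ℂ) ^ (-1 - Complex.I * t) * Complex.exp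
        (-(a * Complex.exp ((δ * (π / 2) : ℝ) * Complex.I) * (y ^ (-(1 / 2) : ℝ) : ℝ))) := by
    intro y hy
    rw [hexpδ, Real.rpow_neg (le_of_lt hy), ← Real.sqrt_eq_rpow, Complex.ofReal_inv]
    congr 2
    ring
  rw [setIntegral_congr_fun measurableSet_Ioi hfun, hLR]
  have hpi : (π : ℂ) ≠ 0 := Complex.ofReal_ne_zero.2 Real.pi_ne_zero
  generalize (∫ u : ℝ, rotatedKernel φ a t (δ * (π / 2)) (σ + u * Complex.I)) = J
  field_simp [Complex.I_ne_zero]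
end

section
/- Let κ, t ∈ ℝ, ε ∈ {−1,1}, a := (1−ε)/2, let γ ≥ 4 be real, T > 0, and C₀ > 0. Let τ̌ : ℕ≥1 → ℂ satisfy |τ̌(n)| ≤ C₀ n^{1/2} for all n ≥ 1, and let H : ℂ → ℂ be an entire function of at most polynomial growth in every vertical strip (i.e. for all σ₁ < σ₂ there exist A, B > 0 with |H(σ+iu)| ≤ A(1+|u|)^{B} whenever σ₁ ≤ σ ≤ σ₂), such that H(s)² = Σ_{n=1}^{∞} τ̌(n) n^{−s} for every s with Re s > 2 (the series converging absolutely there), and such that H(s) = χ(s) H(1−s) for every s on the line Re s = 1/2 − γ/2 at which none of the numbers (s+iκ+a)/2, (s−iκ+a)/2, (1−s+iκ+a)/2, (1−s−iκ+a)/2 is a non-positive integer. Then both series below converge absolutely and Σ_{n=1}^{∞} τ̌(n) n^{−1/2−it} exp( −(n/T)^{γ} ) = H(1/2+it)² + Σ_{n=1}^{∞} τ̌(n) n^{−1/2+it} R(n). -/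
open MeasureTheory Real

/-- The integrand of the contour integral `R(n)` from the proof of Lemma 9 of
Jutila–Motohashi, with parity `ε ∈ {−1,1}`, `a = (1−ε)/2`. -/
noncomputable def Rkernel (κ t ε γ T : ℝ) (n : ℕ) (ξ : ℂ) : ℂ :=
  (Complex.Gamma ((1 / 2 - ξ - Complex.I * t + Complex.I * κ + (1 - (ε : ℂ)) / 2) / 2) /
      Complex.Gamma ((1 / 2 + ξ + Complex.I * t - Complex.I * κ + (1 - (ε : ℂ)) / 2) / 2)) ^ 2 *
    (Complex.Gamma ((1 / 2 - ξ - Complex.I * t - Complex.I * κ + (1 - (ε : ℂ)) / 2) / 2) /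
      Complex.Gamma ((1 / 2 + ξ + Complex.I * t + Complex.I * κ + (1 - (ε : ℂ)) / 2) / 2)) ^ 2 *
    ((π ^ 4 * n * T : ℝ) : ℂ) ^ ξ * Complex.Gamma (ξ / γ)

/-- The contour integral `R(n)` of (3.46) in Jutila–Motohashi, taken over the
upward-oriented vertical line `Re ξ = −γ/2`. -/
noncomputable def Rn (κ t ε γ T : ℝ) (n : ℕ) : ℂ :=
  ((π : ℂ) ^ (4 * Complex.I * t) / (2 * (π : ℂ) * Complex.I * γ)) *
    ∫ u : ℝ, Rkernel κ t ε γ T n (-(γ / 2 : ℝ) + u * Complex.I) * Complex.I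

/-- The factor `χ(s)` of (1.10) in Jutila–Motohashi, with parity `ε ∈ {−1,1}`,
`a = (1−ε)/2`. -/
noncomputable def chiFactor (κ ε : ℝ) (s : ℂ) : ℂ :=
  (ε : ℂ) * (π : ℂ) ^ (2 * s - 1) *
    Complex.Gamma ((1 - s + Complex.I * κ + (1 - (ε : ℂ)) / 2) / 2) *
    Complex.Gamma ((1 - s - Complex.I * κ + (1 - (ε : ℂ)) / 2) / 2) /
    (Complex.Gamma ((s + Complex.I * κ + (1 - (ε : ℂ)) / 2) / 2) *
      Complex.Gamma ((s - Complex.I * κ + (1 - (ε : ℂ)) / 2) / 2))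

theorem integrable_exp_neg_mul_abs {c : ℝ} (hc : 0 < c) :
    Integrable fun u : ℝ => Real.exp (-c * |u|) := by
  rw [← integrableOn_univ, ← Set.Iic_union_Ioi (a := (0 : ℝ))]
  refine IntegrableOn.union ?_ ?_
  · refine (integrableOn_exp_mul_Iic hc 0).congr_fun (fun u hu => ?_) measurableSet_Iic
    simp [abs_of_nonpos (Set.mem_Iic.mp hu)]
  · refine (integrableOn_exp_mul_Ioi (neg_lt_zero.mpr hc) 0).congr_fun (fun u hu => ?_)
      measurableSet_Ioi
    simp [abs_of_pos (Set.mem_Ioi.mp hu)]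

theorem exists_one_add_rpow_le_exp {B δ : ℝ} (hB : 0 < B) (hδ : 0 < δ) :
    ∃ C : ℝ, 0 < C ∧ ∀ x : ℝ, 0 ≤ x → (1 + x) ^ B ≤ C * Real.exp (δ * x) := by
  refine ⟨Real.exp (B * Real.log (B / δ) + δ), Real.exp_pos _, fun x hx => ?_⟩
  have hy : 0 < 1 + x := by linarith
  rw [Real.rpow_def_of_pos hy, ← Real.exp_add, Real.exp_le_exp]
  have h1 := Real.log_le_sub_one_of_pos (x := (1 + x) * (δ / B)) (by positivity)
  rw [Real.log_mul hy.ne' (by positivity)] at h1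
  have h2 : Real.log (δ / B) = -Real.log (B / δ) := by rw [← Real.log_inv, inv_div]
  rw [h2] at h1
  have h3 := mul_le_mul_of_nonneg_left h1 hB.le
  have h4 : B * ((1 + x) * (δ / B) - 1) = (1 + x) * δ - B := by field_simp
  rw [h4] at h3
  nlinarith

theorem norm_Gamma_le_Gamma_re {z : ℂ} (hz : 0 < z.re) : ‖Complex.Gamma z‖ ≤ Real.Gamma z.re := by
  rw [Complex.Gamma_eq_integral hz, Real.Gamma_eq_integral hz, Complex.GammaIntegral]
  refine (norm_integral_le_integral_norm _).trans (le_of_eq ?_)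
  refine setIntegral_congr_fun measurableSet_Ioi fun x hx => ?_
  simp only [norm_mul, Complex.norm_real, Real.norm_eq_abs, abs_of_pos (Real.exp_pos _)]
  rw [Complex.norm_cpow_eq_rpow_re_of_pos hx]
  simp

theorem exists_norm_Gamma_add_half_le (n : ℕ) {θ : ℝ} (hθ : θ < π / 2) :
    ∃ C : ℝ, 0 < C ∧ ∀ u : ℝ,
      ‖Complex.Gamma (n + 1 / 2 + u * Complex.I)‖ ≤ C * Real.exp (-θ * |u|) := by
  induction n generalizing θ with
  | zero =>
    refine ⟨Real.sqrt (2 * π), by positivity, fun u => ?_⟩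
    have h := Complex.Gamma_mul_Gamma_one_sub (1 / 2 + u * Complex.I)
    have hc : (1 : ℂ) - (1 / 2 + u * Complex.I) = (starRingEnd ℂ) (1 / 2 + u * Complex.I) := by
      apply Complex.ext <;> simp
      norm_num
    rw [hc, Complex.Gamma_conj, Complex.mul_conj] at h
    have hs : Complex.sin (π * (1 / 2 + u * Complex.I)) = (Real.cosh (π * u) : ℝ) := by
      rw [show (π : ℂ) * (1 / 2 + u * Complex.I) = (π * u : ℂ) * Complex.I + π / 2 by ring,
        Complex.sin_add_pi_div_two, Complex.cos_mul_I]
      simp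
    rw [hs] at h
    norm_cast at h
    rw [Complex.normSq_eq_norm_sq] at h
    have hz : ((0 : ℕ) : ℂ) + 1 / 2 + u * Complex.I = 1 / 2 + u * Complex.I := by simp
    rw [hz]
    have hcosh : Real.exp (2 * θ * |u|) / 2 ≤ Real.cosh (π * u) := by
      rw [← Real.cosh_abs, abs_mul, abs_of_pos Real.pi_pos, Real.cosh_eq]
      have : Real.exp (2 * θ * |u|) ≤ Real.exp (π * |u|) := by
        gcongr
        linarith
      have := Real.exp_pos (-(π * |u|))
      linarith
    refine abs_le_of_sq_le_sq' ?_ (by positivity) |>.2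
    rw [mul_pow, Real.sq_sqrt (by positivity), h, div_le_iff₀ (Real.cosh_pos _), ← Real.exp_nat_mul]
    have hexp : Real.exp (((2 : ℕ) : ℝ) * (-θ * |u|)) * Real.exp (2 * θ * |u|) = 1 := by
      rw [← Real.exp_add]; simp; ring
    have := mul_le_mul_of_nonneg_left hcosh
      (by positivity : 0 ≤ 2 * π * Real.exp (((2 : ℕ) : ℝ) * (-θ * |u|)))
    refine le_trans (le_of_eq ?_) this
    linear_combination (-π) * hexp
  | succ n ih =>
    obtain ⟨C, hC, h⟩ := ih (θ := (θ + π / 2) / 2) (by linarith)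
    obtain ⟨D, hD, h'⟩ := exists_one_add_rpow_le_exp (B := 1) (δ := (π / 2 - θ) / 2) one_pos
      (by linarith)
    refine ⟨(n + 1) * D * C, by positivity, fun u => ?_⟩
    have hne : (n : ℂ) + 1 / 2 + u * Complex.I ≠ 0 := by
      intro h0
      have := congrArg Complex.re h0
      simp at this
      have : (0 : ℝ) ≤ n := n.cast_nonneg
      linarith
    have he : (((n + 1 : ℕ) : ℂ) + 1 / 2 + u * Complex.I) = (n + 1 / 2 + u * Complex.I) + 1 := by
      push_cast; ring
    rw [he, Complex.Gamma_add_one _ hne, norm_mul]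
    have hn : ‖(n : ℂ) + 1 / 2 + u * Complex.I‖ ≤ (n + 1) * (1 + |u|) := by
      calc _ ≤ ‖(n : ℂ)‖ + ‖(1 / 2 : ℂ)‖ + ‖u * Complex.I‖ := norm_add₃_le
        _ ≤ _ := by
          simp
          have : (0 : ℝ) ≤ n * |u| := by positivity
          nlinarith
    have h1 := h' |u| (abs_nonneg u)
    rw [Real.rpow_one] at h1
    calc _ ≤ ((n + 1) * (D * Real.exp ((π / 2 - θ) / 2 * |u|))) *
          (C * Real.exp (-((θ + π / 2) / 2) * |u|)) := by
          gcongr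
          · exact hn.trans (by gcongr)
          · exact h u
      _ = (n + 1) * D * C * (Real.exp ((π / 2 - θ) / 2 * |u|) *
          Real.exp (-((θ + π / 2) / 2) * |u|)) := by ring
      _ = _ := by rw [← Real.exp_add]; ring_nf

theorem exists_norm_Gamma_le_of_mem_strip (n : ℕ) {θ : ℝ} (hθ0 : 0 ≤ θ) (hθ : θ < π / 2) :
    ∃ C : ℝ, 0 < C ∧ ∀ z : ℂ, 1 / 2 ≤ z.re → z.re ≤ n + 1 / 2 →
      ‖Complex.Gamma z‖ ≤ C * Real.exp (-θ * |z.im|) := by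
  rcases Nat.eq_zero_or_pos n with rfl | hn
  · obtain ⟨C, hC, h⟩ := exists_norm_Gamma_add_half_le 0 hθ
    refine ⟨C, hC, fun z h1 h2 => ?_⟩
    have hz : ((0 : ℕ) : ℂ) + 1 / 2 + z.im * Complex.I = z := by
      apply Complex.ext <;> simp
      norm_num at h1 h2 ⊢
      linarith
    simpa only [hz] using h z.im
  obtain ⟨C₁, hC₁, h₁⟩ := exists_norm_Gamma_add_half_le 0 hθ
  obtain ⟨C₂, hC₂, h₂⟩ := exists_norm_Gamma_add_half_le n hθ
  have hn' : (0 : ℝ) < n := by exact_mod_cast hn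
  obtain ⟨K, hK⟩ : ∃ K, ∀ x ∈ Set.Icc (1 / 2 : ℝ) (n + 1 / 2), ‖Real.Gamma x‖ ≤ K := by
    refine isCompact_Icc.exists_bound_of_continuousOn ?_
    refine Real.differentiableOn_Gamma_Ioi.continuousOn.mono fun x hx => ?_
    exact lt_of_lt_of_le (by norm_num) hx.1
  have key : ∀ η : ℝ, |η| = θ → ∀ z : ℂ, 1 / 2 ≤ z.re → z.re ≤ n + 1 / 2 →
      ‖Complex.Gamma z * Complex.exp (-(η : ℂ) * Complex.I * z)‖ ≤ max C₁ C₂ := by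
    intro η hη z hz1 hz2
    have hnorm : ∀ z : ℂ, ‖Complex.exp (-(η : ℂ) * Complex.I * z)‖ = Real.exp (η * z.im) := by
      intro z
      rw [Complex.norm_exp]
      simp
    have hle : ∀ v : ℝ, η * v ≤ θ * |v| := fun v => by
      rw [← hη, ← abs_mul]; exact le_abs_self _
    have hline : ∀ (m : ℕ) (D : ℝ), (∀ u : ℝ,
        ‖Complex.Gamma (m + 1 / 2 + u * Complex.I)‖ ≤ D * Real.exp (-θ * |u|)) → 0 < D →
        ∀ w : ℂ, w.re = m + 1 / 2 →
        ‖Complex.Gamma w * Complex.exp (-(η : ℂ) * Complex.I * w)‖ ≤ D := by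
      intro m D h hD w hw
      have hz : ((m : ℕ) : ℂ) + 1 / 2 + w.im * Complex.I = w := by
        apply Complex.ext <;> simp [hw]
      rw [norm_mul, hnorm]
      have h' := h w.im
      rw [hz] at h'
      calc _ ≤ D * Real.exp (-θ * |w.im|) * Real.exp (θ * |w.im|) := by
            gcongr ?_ * ?_
            exact Real.exp_le_exp.mpr (hle _)
        _ = D := by rw [mul_assoc, ← Real.exp_add]; simp
    refine PhragmenLindelof.vertical_strip (a := 1 / 2) (b := n + 1 / 2)
      (f := fun z => Complex.Gamma z * Complex.exp (-(η : ℂ) * Complex.I * z)) ?_ ?_ ?_ ?_ hz1 hz2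
    · have hd : DifferentiableOn ℂ
          (fun z => Complex.Gamma z * Complex.exp (-(η : ℂ) * Complex.I * z)) {z | 0 < z.re} := by
        intro w hw
        refine (DifferentiableAt.mul (Complex.differentiableAt_Gamma w fun m hm => ?_)
          (by fun_prop)).differentiableWithinAt
        have : (0 : ℝ) ≤ m := m.cast_nonneg
        have h0 : 0 < w.re := hw
        rw [hm] at h0
        simp at h0
        linarith
      refine DifferentiableOn.diffContOnCl (hd.mono ?_)
      refine (closure_minimal (t := Complex.re ⁻¹' Set.Icc (1 / 2) (n + 1 / 2))
        (Set.preimage_mono Set.Ioo_subset_Icc_self)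
        (isClosed_Icc.preimage Complex.continuous_re)).trans fun w hw => ?_
      exact lt_of_lt_of_le (by norm_num) hw.1
    · refine ⟨π / (2 * n), ?_, θ / (π / (2 * n)), ?_⟩
      · rw [add_sub_cancel_right]
        exact div_lt_div_of_pos_left Real.pi_pos hn' (by linarith)
      · refine Asymptotics.IsBigO.of_bound K ?_
        refine Filter.eventually_inf_principal.mpr (Filter.Eventually.of_forall fun w hw => ?_)
        have hw0 : 0 < w.re := lt_trans (by norm_num) hw.1
        rw [norm_mul, hnorm, Real.norm_eq_abs, Real.abs_exp]
        have hG := norm_Gamma_le_Gamma_re hw0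
        have hG' := (le_abs_self _).trans (hK w.re ⟨hw.1.le, hw.2.le⟩)
        refine mul_le_mul (hG.trans hG') (Real.exp_le_exp.mpr ?_) (Real.exp_pos _).le
          ((norm_nonneg _).trans (hG.trans hG'))
        · refine (hle _).trans ?_
          have hc : 0 < π / (2 * n) := by positivity
          have := Real.add_one_le_exp (π / (2 * n) * |w.im|)
          calc θ * |w.im| = θ / (π / (2 * n)) * (π / (2 * n) * |w.im|) := by field_simp
            _ ≤ _ := by gcongr; linarith
    · intro w hw
      exact (hline 0 C₁ h₁ hC₁ w (by simp [hw])).trans (le_max_left _ _)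
    · intro w hw
      exact (hline n C₂ h₂ hC₂ w (by simp [hw])).trans (le_max_right _ _)
  refine ⟨max C₁ C₂, by positivity, fun z hz1 hz2 => ?_⟩
  obtain ⟨η, hη, hη'⟩ : ∃ η : ℝ, |η| = θ ∧ η * z.im = θ * |z.im| := by
    rcases le_total 0 z.im with h | h
    · exact ⟨θ, abs_of_nonneg hθ0, by rw [abs_of_nonneg h]⟩
    · exact ⟨-θ, by rw [abs_neg, abs_of_nonneg hθ0], by rw [abs_of_nonpos h]; ring⟩
  have := key η hη z hz1 hz2
  rw [norm_mul, Complex.norm_exp] at this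
  have hre : (-(η : ℂ) * Complex.I * z).re = θ * |z.im| := by rw [← hη']; simp
  rw [hre] at this
  rw [neg_mul, Real.exp_neg, ← div_eq_mul_inv, le_div_iff₀ (Real.exp_pos _)]
  exact this

theorem norm_sin_le_exp (z : ℂ) : ‖Complex.sin z‖ ≤ Real.exp |z.im| := by
  rw [Complex.sin, norm_div, norm_mul, Complex.norm_I, Complex.norm_ofNat, mul_one]
  have h := norm_sub_le (Complex.exp (-z * Complex.I)) (Complex.exp (z * Complex.I))
  simp only [Complex.norm_exp, Complex.mul_re, Complex.neg_re, Complex.neg_im, Complex.I_re,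
    Complex.I_im, mul_zero, mul_one, zero_sub, neg_neg] at h
  have h1 : Real.exp z.im ≤ Real.exp |z.im| := Real.exp_le_exp.mpr (le_abs_self _)
  have h2 : Real.exp (-z.im) ≤ Real.exp |z.im| := Real.exp_le_exp.mpr (neg_le_abs _)
  linarith

theorem inv_Gamma_eq {z : ℂ} (hz : z.re < 1) :
    (Complex.Gamma z)⁻¹ = Complex.Gamma (1 - z) * Complex.sin (π * z) / π := by
  have hpi : (π : ℂ) ≠ 0 := Complex.ofReal_ne_zero.mpr Real.pi_ne_zero
  have h := Complex.Gamma_mul_Gamma_one_sub z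
  have h1 : Complex.Gamma (1 - z) ≠ 0 := Complex.Gamma_ne_zero_of_re_pos (by simpa using hz)
  by_cases hs : Complex.sin (π * z) = 0
  · rw [hs, div_zero] at h
    rw [(mul_eq_zero.mp h).resolve_right h1, hs]
    simp
  · have h0 : Complex.Gamma z ≠ 0 := by
      rintro h0
      rw [h0, zero_mul] at h
      exact div_ne_zero hpi hs h.symm
    rw [eq_div_iff hs] at h
    rw [inv_eq_iff_eq_inv, inv_div, eq_div_iff (mul_ne_zero h1 hs)]
    linear_combination h

/-- The quotient of Gamma factors in a functional equation of parity `a ∈ {0, 1}`. -/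
theorem Gamma_div_Gamma_eq {a w : ℂ} (ha : a = 0 ∨ a = 1) (hw : w.re < 1) :
    Complex.Gamma ((1 - w + a) / 2) / Complex.Gamma ((w + a) / 2) =
      Complex.Gamma (1 - w) * 2 ^ w * (√π : ℝ) * Complex.sin (π * ((w + a) / 2)) / π := by
  have hd := Complex.Gamma_mul_Gamma_add_half ((1 - w) / 2)
  rw [show 2 * ((1 - w) / 2) = 1 - w by ring, show 1 - (1 - w) = w by ring,
    show (1 - w) / 2 + 1 / 2 = 1 - w / 2 by ring] at hd
  have hre : ((w + a) / 2).re < 1 := by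
    rcases ha with rfl | rfl
    · rw [add_zero, Complex.div_ofNat_re]; linarith
    · rw [Complex.div_ofNat_re, Complex.add_re, Complex.one_re]; linarith
  rw [div_eq_mul_inv, inv_Gamma_eq hre, ← hd]
  rcases ha with rfl | rfl
  · simp only [add_zero]; ring
  · rw [show (1 - w + 1) / 2 = 1 - w / 2 by ring, show 1 - (w + 1) / 2 = (1 - w) / 2 by ring]
    ring

theorem exists_norm_Gamma_div_Gamma_le {a : ℂ} (ha : a = 0 ∨ a = 1) {σ : ℝ} (hσ : σ ≤ 1 / 2)
    {δ : ℝ} (hδ0 : 0 < δ) (hδ : δ ≤ π / 2) :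
    ∃ C : ℝ, 0 < C ∧ ∀ w : ℂ, w.re = σ →
      ‖Complex.Gamma ((1 - w + a) / 2) / Complex.Gamma ((w + a) / 2)‖ ≤
        C * Real.exp (δ * |w.im|) := by
  obtain ⟨n, hn⟩ := exists_nat_ge (1 - σ)
  obtain ⟨C, hC, h⟩ := exists_norm_Gamma_le_of_mem_strip n (θ := π / 2 - δ) (by linarith)
    (by linarith)
  refine ⟨C * 2 ^ σ * √π / π, by positivity, fun w hw => ?_⟩
  rw [Gamma_div_Gamma_eq ha (by linarith)]
  have h1 := h (1 - w) (by simp; linarith) (by simp; linarith)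
  have h2 := norm_sin_le_exp (π * ((w + a) / 2))
  have him : ((π : ℂ) * ((w + a) / 2)).im = π / 2 * w.im := by
    rw [Complex.im_ofReal_mul, Complex.div_ofNat_im, Complex.add_im]
    rcases ha with rfl | rfl <;> simp <;> ring
  have him' : |(1 - w).im| = |w.im| := by simp
  rw [him'] at h1
  rw [him, abs_mul, abs_of_pos (by positivity : 0 < π / 2)] at h2
  have h3 : ‖(2 : ℂ) ^ w‖ = 2 ^ σ := by
    rw [← hw]; exact_mod_cast Complex.norm_cpow_eq_rpow_re_of_pos (x := 2) two_pos w
  rw [norm_div, norm_mul, norm_mul, norm_mul, h3, Complex.norm_real, Complex.norm_real,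
    Real.norm_of_nonneg (Real.sqrt_nonneg _), Real.norm_of_nonneg Real.pi_pos.le]
  calc _ ≤ C * Real.exp (-(π / 2 - δ) * |w.im|) * 2 ^ σ * √π * Real.exp (π / 2 * |w.im|) / π := by
        gcongr
    _ = C * 2 ^ σ * √π / π * (Real.exp (-(π / 2 - δ) * |w.im|) * Real.exp (π / 2 * |w.im|)) := by
        ring
    _ = _ := by rw [← Real.exp_add]; ring_nf

theorem intervalIntegral_inv_add_mul_I {c : ℝ} (hc : c ≠ 0) (U : ℝ) :
    ∫ u in (-U)..U, ((c : ℂ) + u * Complex.I)⁻¹ = (2 * Real.arctan (U / c) : ℝ) := by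
  have hcont : Continuous fun u : ℝ => ((c : ℂ) + u * Complex.I)⁻¹ := by
    refine Continuous.inv₀ (by fun_prop) fun u h => hc ?_
    simpa using congrArg Complex.re h
  have hadd : ∫ u in (-U)..U, (((c : ℂ) + u * Complex.I)⁻¹ + ((c : ℂ) + (-u : ℝ) * Complex.I)⁻¹) =
      (2 * c * (c⁻¹ * (Real.arctan (U / c) - Real.arctan (-U / c))) : ℝ) := by
    rw [← integral_inv_sq_add_sq hc, ← intervalIntegral.integral_const_mul,
      ← intervalIntegral.integral_ofReal]
    refine intervalIntegral.integral_congr fun u _ => ?_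
    have h1 : (c : ℂ) + u * Complex.I ≠ 0 := fun h => hc (by simpa using congrArg Complex.re h)
    have h2 : (c : ℂ) + (-u : ℝ) * Complex.I ≠ 0 := fun h =>
      hc (by simpa using congrArg Complex.re h)
    have h3 : (c : ℂ) ^ 2 + (u : ℂ) ^ 2 = (c + u * Complex.I) * (c + (-u : ℝ) * Complex.I) := by
      push_cast
      linear_combination (u : ℂ) ^ 2 * Complex.I_sq
    simp only [Complex.ofReal_mul, Complex.ofReal_inv, Complex.ofReal_add, Complex.ofReal_pow, h3]
    rw [inv_add_inv h1 h2]
    push_cast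
    ring
  have hswap : ∫ u in (-U)..U, ((c : ℂ) + (-u : ℝ) * Complex.I)⁻¹ =
      ∫ u in (-U)..U, ((c : ℂ) + u * Complex.I)⁻¹ := by
    rw [intervalIntegral.integral_comp_neg (fun u : ℝ => ((c : ℂ) + u * Complex.I)⁻¹), neg_neg]
  have hcont' : Continuous fun u : ℝ => ((c : ℂ) + (-u : ℝ) * Complex.I)⁻¹ :=
    hcont.comp continuous_neg
  rw [intervalIntegral.integral_add (hcont.intervalIntegrable _ _)
    (hcont'.intervalIntegrable _ _), hswap, neg_div, Real.arctan_neg] at hadd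
  have h4 : (2 * c * (c⁻¹ * (Real.arctan (U / c) - -Real.arctan (U / c)))) =
      2 * (2 * Real.arctan (U / c)) := by
    field_simp
    ring
  rw [h4] at hadd
  push_cast at hadd ⊢
  linear_combination hadd / 2

theorem integral_vertical_sub_integral_vertical {f : ℂ → ℂ} {d b c K : ℝ} (hdb : d < b)
    (hb : b < 0) (hc : 0 < c) (hf : DifferentiableOn ℂ f {z | d < z.re})
    (hK : ∀ z : ℂ, b ≤ z.re → z.re ≤ c → ‖f z‖ ≤ K)
    (hfb : Integrable fun u : ℝ => f (b + u * Complex.I) / (b + u * Complex.I))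
    (hfc : Integrable fun u : ℝ => f (c + u * Complex.I) / (c + u * Complex.I)) :
    (∫ u : ℝ, f (c + u * Complex.I) / (c + u * Complex.I)) -
      ∫ u : ℝ, f (b + u * Complex.I) / (b + u * Complex.I) = 2 * π * f 0 := by
  have hopen : IsOpen {z : ℂ | d < z.re} := isOpen_lt continuous_const Complex.continuous_re
  have h0mem : {z : ℂ | d < z.re} ∈ nhds (0 : ℂ) :=
    hopen.mem_nhds (by simpa using hdb.trans hb)
  set g := dslope f 0 with hg
  have hgd : DifferentiableOn ℂ g {z | d < z.re} := (Complex.differentiableOn_dslope h0mem).mpr hf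
  have hgne : ∀ z : ℂ, z ≠ 0 → g z = f z / z - f 0 * z⁻¹ := fun z hz => by
    rw [hg, dslope_of_ne _ hz, slope_def_field]
    ring
  have hne : ∀ a : ℝ, a ≠ 0 → ∀ u : ℝ, (a : ℂ) + u * Complex.I ≠ 0 := fun a ha u h =>
    ha (by simpa using congrArg Complex.re h)
  have hvert : ∀ a : ℝ, a ≠ 0 →
      Integrable (fun u : ℝ => f (a + u * Complex.I) / (a + u * Complex.I)) → ∀ U : ℝ,
      ∫ u in (-U)..U, g (a + u * Complex.I) =
        (∫ u in (-U)..U, f (a + u * Complex.I) / (a + u * Complex.I)) -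
          f 0 * (2 * Real.arctan (U / a) : ℝ) := by
    intro a ha hfa U
    have hcont : Continuous fun u : ℝ => ((a : ℂ) + u * Complex.I)⁻¹ :=
      Continuous.inv₀ (by fun_prop) (hne a ha)
    rw [← intervalIntegral_inv_add_mul_I ha, ← intervalIntegral.integral_const_mul,
      ← intervalIntegral.integral_sub hfa.intervalIntegrable
        ((hcont.const_mul _).intervalIntegrable _ _)]
    exact intervalIntegral.integral_congr fun u _ => hgne _ (hne a ha u)
  have hrect : ∀ U : ℝ, ((∫ x in b..c, g (x + (-U : ℝ) * Complex.I)) -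
      ∫ x in b..c, g (x + (U : ℝ) * Complex.I)) +
      Complex.I * (∫ u in (-U)..U, g (c + u * Complex.I)) -
      Complex.I * (∫ u in (-U)..U, g (b + u * Complex.I)) = 0 := by
    intro U
    have := Complex.integral_boundary_rect_eq_zero_of_differentiableOn g
      (b + (-U : ℝ) * Complex.I) (c + (U : ℝ) * Complex.I) (hgd.mono ?_)
    · simpa using this
    · intro z hz
      have h1 := hz.1
      simp only [Complex.add_re, Complex.ofReal_re, Complex.re_ofReal_mul, Complex.I_re, mul_zero,
        add_zero, Set.mem_preimage, Set.uIcc_of_le (hb.trans hc).le] at h1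
      exact lt_of_lt_of_le hdb h1.1
  have hhor : ∀ s : ℝ, |s| = 1 → Filter.Tendsto
      (fun U : ℝ => ∫ x in b..c, g (x + (s * U : ℝ) * Complex.I)) Filter.atTop (nhds 0) := by
    intro s hs
    refine squeeze_zero_norm' (a := fun U : ℝ => 2 * K / U * |c - b|) ?_ ?_
    · filter_upwards [Filter.eventually_gt_atTop 0] with U hU
      refine intervalIntegral.norm_integral_le_of_norm_le_const fun x hx => ?_
      rw [Set.uIoc_of_le (hb.trans hc).le] at hx
      have hUn : U ≤ ‖(x : ℂ) + (s * U : ℝ) * Complex.I‖ := by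
        have := Complex.abs_im_le_norm ((x : ℂ) + (s * U : ℝ) * Complex.I)
        have him : ((x : ℂ) + (s * U : ℝ) * Complex.I).im = s * U := by simp
        rwa [him, abs_mul, hs, one_mul, abs_of_pos hU] at this
      have hz : (x : ℂ) + (s * U : ℝ) * Complex.I ≠ 0 := norm_pos_iff.mp (hU.trans_le hUn)
      rw [hgne _ hz, ← div_eq_mul_inv, ← sub_div, norm_div]
      have h1 := hK (x + (s * U : ℝ) * Complex.I) (by simpa using hx.1.le) (by simpa using hx.2)
      have h2 := hK 0 (by simpa using hb.le) (by simpa using hc.le)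
      have h3 := norm_sub_le (f (x + (s * U : ℝ) * Complex.I)) (f 0)
      exact div_le_div₀ (by linarith [norm_nonneg (f 0)]) (by linarith) hU hUn
    · simpa using ((Filter.tendsto_id.const_div_atTop (2 * K)).mul_const |c - b|)
  have hlim : ∀ a : ℝ, a ≠ 0 →
      Integrable (fun u : ℝ => f (a + u * Complex.I) / (a + u * Complex.I)) → ∀ l : ℝ,
      Filter.Tendsto (fun U : ℝ => Real.arctan (U / a)) Filter.atTop (nhds l) →
      Filter.Tendsto (fun U : ℝ => ∫ u in (-U)..U, g (a + u * Complex.I)) Filter.atTop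
        (nhds ((∫ u : ℝ, f (a + u * Complex.I) / (a + u * Complex.I)) - f 0 * (2 * l : ℝ))) := by
    intro a ha hfa l hl
    simp_rw [hvert a ha hfa]
    refine (intervalIntegral_tendsto_integral hfa Filter.tendsto_neg_atTop_atBot
      Filter.tendsto_id).sub (Filter.Tendsto.const_mul _ ?_)
    exact (Complex.continuous_ofReal.tendsto _).comp (hl.const_mul 2)
  have hLc := hlim c hc.ne' hfc (π / 2) ((Real.tendsto_arctan_atTop.mono_right
    nhdsWithin_le_nhds).comp (Filter.tendsto_id.atTop_div_const hc))
  have hLb := hlim b hb.ne hfb (-(π / 2)) ((Real.tendsto_arctan_atBot.mono_right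
    nhdsWithin_le_nhds).comp (Filter.tendsto_id.atTop_div_const_of_neg hb))
  have hm := hhor (-1) (by simp)
  have hp := hhor 1 (by simp)
  have htot := ((hm.sub hp).add (hLc.const_mul Complex.I)).sub (hLb.const_mul Complex.I)
  have hzero : (fun U : ℝ => ((∫ x in b..c, g (x + (-1 * U : ℝ) * Complex.I)) -
      ∫ x in b..c, g (x + (1 * U : ℝ) * Complex.I)) +
      Complex.I * (∫ u in (-U)..U, g (c + u * Complex.I)) -
      Complex.I * (∫ u in (-U)..U, g (b + u * Complex.I))) = fun _ => 0 := by
    funext U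
    simpa only [neg_one_mul, one_mul] using hrect U
  rw [hzero] at htot
  have := tendsto_nhds_unique htot tendsto_const_nhds
  push_cast at this
  refine mul_left_cancel₀ Complex.I_ne_zero ?_
  linear_combination this

theorem integrable_of_norm_le_exp_neg_mul_abs {f : ℝ → ℂ} (hf : Continuous f) {C c : ℝ}
    (hc : 0 < c) (h : ∀ u, ‖f u‖ ≤ C * Real.exp (-c * |u|)) : Integrable f :=
  ((integrable_exp_neg_mul_abs hc).const_mul C).mono' hf.aestronglyMeasurable
    (Filter.Eventually.of_forall h)

theorem differentiableAt_Gamma_of_neg_one_lt_re {z : ℂ} (hz : -1 < z.re) (hz0 : z.re ≠ 0) :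
    DifferentiableAt ℂ Complex.Gamma z := by
  refine Complex.differentiableAt_Gamma z fun m hm => ?_
  rw [hm] at hz hz0
  simp only [Complex.neg_re, Complex.natCast_re] at hz hz0
  have h1 : (m : ℝ) < 1 := by linarith
  have h2 : m = 0 := by
    have : m < 1 := by exact_mod_cast h1
    omega
  simp [h2] at hz0

theorem continuous_Gamma_vertical_div {σ γ : ℝ} (h1 : -1 < σ / γ) (h0 : σ / γ ≠ 0) :
    Continuous fun u : ℝ => Complex.Gamma ((σ + u * Complex.I) / γ) := by
  refine continuous_iff_continuousAt.mpr fun u => ?_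
  have hre : (((σ : ℂ) + u * Complex.I) / γ).re = σ / γ := by
    rw [Complex.div_ofReal_re]; simp
  exact ContinuousAt.comp (g := Complex.Gamma) (f := fun u : ℝ => ((σ : ℂ) + u * Complex.I) / γ)
    (differentiableAt_Gamma_of_neg_one_lt_re (by rwa [hre]) (by rwa [hre])).continuousAt
    (by fun_prop)

theorem exists_norm_Gamma_le_of_re_eq {σ θ : ℝ} (hσ : -(1 / 2) ≤ σ) (hσ0 : σ ≠ 0) (hθ0 : 0 ≤ θ)
    (hθ : θ < π / 2) :
    ∃ C : ℝ, 0 < C ∧ ∀ z : ℂ, z.re = σ → ‖Complex.Gamma z‖ ≤ C * Real.exp (-θ * |z.im|) := by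
  obtain ⟨n, hn⟩ := exists_nat_ge (σ + 1)
  obtain ⟨C, hC, h⟩ := exists_norm_Gamma_le_of_mem_strip n hθ0 hθ
  refine ⟨C / |σ|, div_pos hC (abs_pos.mpr hσ0), fun z hz => ?_⟩
  have hz0 : z ≠ 0 := by
    rintro rfl
    exact hσ0 (by simpa using hz.symm)
  have h1 := h (z + 1) (by simp [hz]; linarith) (by simp [hz]; linarith)
  rw [Complex.Gamma_add_one z hz0, norm_mul, Complex.add_im, Complex.one_im, add_zero] at h1
  have h2 : |σ| ≤ ‖z‖ := hz ▸ Complex.abs_re_le_norm z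
  rw [div_mul_eq_mul_div, le_div_iff₀ (abs_pos.mpr hσ0), mul_comm]
  exact (mul_le_mul_of_nonneg_right h2 (norm_nonneg _)).trans h1

theorem integrable_Gamma_vertical_div {σ γ : ℝ} (hγ : 0 < γ) (hσ : 0 < σ) :
    Integrable fun u : ℝ => Complex.Gamma ((σ + u * Complex.I) / γ) := by
  have hpos : 0 < σ / γ := div_pos hσ hγ
  obtain ⟨C, -, h⟩ := exists_norm_Gamma_le_of_re_eq (σ := σ / γ) (θ := 1) (by linarith) hpos.ne'
    zero_le_one (by linarith [Real.pi_gt_three])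
  refine integrable_of_norm_le_exp_neg_mul_abs (C := C) (c := 1 / γ)
    (continuous_Gamma_vertical_div (by linarith) hpos.ne') (by positivity) fun u => ?_
  have := h ((σ + u * Complex.I) / γ) (by rw [Complex.div_ofReal_re]; simp)
  rw [Complex.div_ofReal_im] at this
  simp only [Complex.add_im, Complex.ofReal_im, Complex.mul_im, Complex.ofReal_re, Complex.I_im,
    Complex.I_re, mul_one, mul_zero, zero_add, add_zero, abs_div, abs_of_pos hγ] at this
  refine this.trans (le_of_eq ?_)
  ring_nf

theorem exp_neg_rpow_eq_integral {γ σ y : ℝ} (hγ : 0 < γ) (hσ : 0 < σ) (hy : 0 < y) :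
    (Real.exp (-y ^ γ) : ℂ) = 1 / (2 * π * γ) *
      ∫ u : ℝ, (y : ℂ) ^ (-(σ + u * Complex.I)) * Complex.Gamma ((σ + u * Complex.I) / γ) := by
  have hmel : ∀ z : ℂ, 0 < z.re →
      mellin (fun x : ℝ => (Real.exp (-x ^ γ) : ℂ)) z = (γ : ℂ)⁻¹ * Complex.Gamma (z / γ) := by
    intro z hz
    rw [mellin_comp_rpow (fun x : ℝ => (Real.exp (-x) : ℂ)) z γ, abs_of_pos hγ,
      ← Complex.GammaIntegral_eq_mellin, Complex.Gamma_eq_integral]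
    · simp
    · rw [Complex.div_ofReal_re]; positivity
  have hre : ∀ u : ℝ, 0 < ((σ : ℂ) + u * Complex.I).re := fun u => by simpa using hσ
  have h := mellinInv_mellin_eq σ (fun x : ℝ => (Real.exp (-x ^ γ) : ℂ)) hy ?_ ?_ ?_
  · rw [← h, mellinInv]
    simp_rw [hmel _ (hre _), smul_eq_mul]
    rw [Complex.real_smul]
    simp_rw [mul_left_comm _ (γ : ℂ)⁻¹]
    rw [integral_const_mul]
    push_cast
    ring
  · refine (MellinConvergent.comp_rpow (f := fun x : ℝ => (Real.exp (-x) : ℂ)) hγ.ne').mpr ?_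
    have := Complex.GammaIntegral_convergent (s := (σ : ℂ) / γ)
      (by rw [Complex.div_ofReal_re]; simpa using div_pos hσ hγ)
    refine this.congr_fun (fun x _ => ?_) measurableSet_Ioi
    simp [mul_comm]
  · rw [Complex.VerticalIntegrable]
    simp_rw [hmel _ (hre _)]
    exact (integrable_Gamma_vertical_div hγ hσ).const_mul _
  · have : ContinuousAt (fun x : ℝ => x ^ γ) y := Real.continuousAt_rpow_const _ _ (Or.inl hy.ne')
    fun_prop

theorem tsum_integral_dirichlet_mul {τ : ℕ → ℂ} {σ : ℝ}
    (hτ : Summable fun n : ℕ => ‖τ (n + 1) * ((n + 1 : ℕ) : ℂ) ^ (-(σ : ℂ))‖)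
    {s : ℝ → ℂ} (hs : Continuous s) (hre : ∀ u, (s u).re = σ) {K : ℝ → ℂ} (hK : Integrable K) :
    (Summable fun n : ℕ => ‖∫ u, τ (n + 1) * ((n + 1 : ℕ) : ℂ) ^ (-s u) * K u‖) ∧
      ∑' n : ℕ, ∫ u, τ (n + 1) * ((n + 1 : ℕ) : ℂ) ^ (-s u) * K u =
        ∫ u, (∑' n : ℕ, τ (n + 1) * ((n + 1 : ℕ) : ℂ) ^ (-s u)) * K u := by
  have hn0 : ∀ n : ℕ, ((n + 1 : ℕ) : ℂ) ≠ 0 := fun n => Nat.cast_ne_zero.mpr n.succ_ne_zero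
  have hnorm : ∀ (n : ℕ) (u : ℝ), ‖τ (n + 1) * ((n + 1 : ℕ) : ℂ) ^ (-s u)‖ =
      ‖τ (n + 1) * ((n + 1 : ℕ) : ℂ) ^ (-(σ : ℂ))‖ := fun n u => by
    rw [norm_mul, norm_mul, Complex.norm_natCast_cpow_of_pos n.succ_pos,
      Complex.norm_natCast_cpow_of_pos n.succ_pos]
    simp [hre]
  have hint : ∀ n : ℕ, Integrable fun u => τ (n + 1) * ((n + 1 : ℕ) : ℂ) ^ (-s u) * K u := by
    intro n
    refine hK.bdd_mul (c := ‖τ (n + 1) * ((n + 1 : ℕ) : ℂ) ^ (-(σ : ℂ))‖)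
      (Continuous.aestronglyMeasurable ?_) (Filter.Eventually.of_forall fun u => (hnorm n u).le)
    exact continuous_const.mul (Continuous.const_cpow hs.neg (Or.inl (hn0 n)))
  have heq : ∀ n : ℕ, ∫ u, ‖τ (n + 1) * ((n + 1 : ℕ) : ℂ) ^ (-s u) * K u‖ =
      ‖τ (n + 1) * ((n + 1 : ℕ) : ℂ) ^ (-(σ : ℂ))‖ * ∫ u, ‖K u‖ := fun n => by
    simp_rw [norm_mul _ (K _), hnorm]
    rw [integral_const_mul]
  have hsum : Summable fun n : ℕ => ∫ u, ‖τ (n + 1) * ((n + 1 : ℕ) : ℂ) ^ (-s u) * K u‖ := by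
    simp_rw [heq]
    exact hτ.mul_right _
  refine ⟨hsum.of_nonneg_of_le (fun _ => norm_nonneg _)
    fun n => norm_integral_le_integral_norm _, ?_⟩
  rw [(hasSum_integral_of_summable_integral_norm hint hsum).tsum_eq]
  simp_rw [tsum_mul_right]

theorem chiFactor_eq (κ ε : ℝ) (s : ℂ) :
    chiFactor κ ε s = ε * (π : ℂ) ^ (2 * s - 1) *
      (Complex.Gamma ((1 - (s - Complex.I * κ) + (1 - (ε : ℂ)) / 2) / 2) /
        Complex.Gamma ((s - Complex.I * κ + (1 - (ε : ℂ)) / 2) / 2)) *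
      (Complex.Gamma ((1 - (s + Complex.I * κ) + (1 - (ε : ℂ)) / 2) / 2) /
        Complex.Gamma ((s + Complex.I * κ + (1 - (ε : ℂ)) / 2) / 2)) := by
  rw [chiFactor, show 1 - (s - Complex.I * κ) = 1 - s + Complex.I * κ by ring,
    show 1 - (s + Complex.I * κ) = 1 - s - Complex.I * κ by ring]
  ring

theorem parity_eq_zero_or_one {ε : ℝ} (hε : ε = 1 ∨ ε = -1) :
    (1 - (ε : ℂ)) / 2 = 0 ∨ (1 - (ε : ℂ)) / 2 = 1 := by
  rcases hε with rfl | rfl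
  · left; simp
  · right; push_cast; norm_num

theorem exists_norm_chiFactor_le (κ : ℝ) {ε : ℝ} (hε : ε = 1 ∨ ε = -1) {σ : ℝ} (hσ : σ ≤ 1 / 2)
    {δ : ℝ} (hδ0 : 0 < δ) (hδ : δ ≤ π) :
    ∃ C : ℝ, 0 < C ∧ ∀ s : ℂ, s.re = σ → ‖chiFactor κ ε s‖ ≤ C * Real.exp (δ * |s.im|) := by
  obtain ⟨C, hC, h⟩ := exists_norm_Gamma_div_Gamma_le (parity_eq_zero_or_one hε) hσ (half_pos hδ0)
    (by linarith)
  refine ⟨π ^ (2 * σ - 1) * (C * Real.exp (δ / 2 * |κ|)) ^ 2, by positivity, fun s hs => ?_⟩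
  have hε1 : ‖(ε : ℂ)‖ = 1 := by rcases hε with rfl | rfl <;> simp
  have hpi : ‖(π : ℂ) ^ (2 * s - 1)‖ = π ^ (2 * σ - 1) := by
    rw [Complex.norm_cpow_eq_rpow_re_of_pos Real.pi_pos]
    simp [hs]
  have hle : ∀ w : ℂ, w.re = σ → |w.im| ≤ |s.im| + |κ| →
      ‖Complex.Gamma ((1 - w + (1 - (ε : ℂ)) / 2) / 2) /
        Complex.Gamma ((w + (1 - (ε : ℂ)) / 2) / 2)‖ ≤
        C * Real.exp (δ / 2 * |κ|) * Real.exp (δ / 2 * |s.im|) := by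
    intro w hw him
    refine (h w hw).trans ?_
    rw [mul_assoc, ← Real.exp_add, ← mul_add, add_comm |κ|]
    gcongr
  have h1 := hle (s - Complex.I * κ) (by simpa using hs) (by simpa using abs_sub s.im κ)
  have h2 := hle (s + Complex.I * κ) (by simpa using hs) (by simpa using abs_add_le s.im κ)
  rw [chiFactor_eq, norm_mul, norm_mul, norm_mul, hε1, one_mul, hpi]
  calc _ ≤ π ^ (2 * σ - 1) * (C * Real.exp (δ / 2 * |κ|) * Real.exp (δ / 2 * |s.im|)) *
        (C * Real.exp (δ / 2 * |κ|) * Real.exp (δ / 2 * |s.im|)) := by gcongr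
    _ = π ^ (2 * σ - 1) * (C * Real.exp (δ / 2 * |κ|)) ^ 2 *
        (Real.exp (δ / 2 * |s.im|) * Real.exp (δ / 2 * |s.im|)) := by ring
    _ = _ := by rw [← Real.exp_add]; ring_nf

theorem continuousAt_chiFactor (κ : ℝ) {ε : ℝ} (hε : ε = 1 ∨ ε = -1) {s : ℂ} (hs : s.re < 1) :
    ContinuousAt (chiFactor κ ε) s := by
  have hratio : ∀ w : ℂ, w.re < 1 → ContinuousAt (fun w : ℂ =>
      Complex.Gamma ((1 - w + (1 - (ε : ℂ)) / 2) / 2) /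
        Complex.Gamma ((w + (1 - (ε : ℂ)) / 2) / 2)) w := by
    intro w hw
    simp_rw [div_eq_mul_inv (Complex.Gamma _)]
    refine ContinuousAt.mul ?_ ?_
    · have hpos : 0 < ((1 - w + (1 - (ε : ℂ)) / 2) / 2).re := by
        rcases parity_eq_zero_or_one hε with h | h <;> rw [h, Complex.div_ofNat_re] <;>
          simp <;> linarith
      exact ContinuousAt.comp (g := Complex.Gamma)
        (f := fun w : ℂ => (1 - w + (1 - (ε : ℂ)) / 2) / 2)
        (differentiableAt_Gamma_of_neg_one_lt_re (by linarith) hpos.ne').continuousAt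
        (by fun_prop)
    · exact (Complex.differentiable_one_div_Gamma.continuous.comp
        (by fun_prop : Continuous fun w : ℂ => (w + (1 - (ε : ℂ)) / 2) / 2)).continuousAt
  have hfun : chiFactor κ ε = fun s => _ := funext (chiFactor_eq κ ε)
  rw [hfun]
  refine ContinuousAt.mul (ContinuousAt.mul (ContinuousAt.mul continuousAt_const ?_) ?_) ?_
  · exact ContinuousAt.const_cpow (by fun_prop)
      (Or.inl (Complex.ofReal_ne_zero.mpr Real.pi_ne_zero))
  · exact ContinuousAt.comp (f := fun s : ℂ => s - Complex.I * κ)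
      (hratio (s - Complex.I * κ) (by simpa using hs)) (by fun_prop)
  · exact ContinuousAt.comp (f := fun s : ℂ => s + Complex.I * κ)
      (hratio (s + Complex.I * κ) (by simpa using hs)) (by fun_prop)

theorem pi_cpow_mul_Rkernel (κ t γ : ℝ) {ε T : ℝ} (hε : ε = 1 ∨ ε = -1) (hT : 0 < T) (n : ℕ)
    (ξ : ℂ) :
    (π : ℂ) ^ (4 * Complex.I * t) * Rkernel κ t ε γ T n ξ =
      (n : ℂ) ^ ξ *
        (chiFactor κ ε (1 / 2 + Complex.I * t + ξ) ^ 2 * (T : ℂ) ^ ξ * Complex.Gamma (ξ / γ)) := by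
  have hpi0 : (π : ℂ) ≠ 0 := Complex.ofReal_ne_zero.mpr Real.pi_ne_zero
  have hε2 : (ε : ℂ) ^ 2 = 1 := by rcases hε with rfl | rfl <;> simp
  have hpow : ((π ^ 4 * n * T : ℝ) : ℂ) ^ ξ =
      ((π : ℂ) ^ ξ) ^ 4 * (n : ℂ) ^ ξ * (T : ℂ) ^ ξ := by
    have hπ := Real.pi_pos.le
    have hn : (0 : ℝ) ≤ n := n.cast_nonneg
    rw [show π ^ 4 * n * T = π * (π * (π * (π * (n * T)))) by ring, Complex.ofReal_mul,
      Complex.mul_cpow_ofReal_nonneg hπ (by positivity), Complex.ofReal_mul,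
      Complex.mul_cpow_ofReal_nonneg hπ (by positivity), Complex.ofReal_mul,
      Complex.mul_cpow_ofReal_nonneg hπ (by positivity), Complex.ofReal_mul,
      Complex.mul_cpow_ofReal_nonneg hπ (by positivity), Complex.ofReal_mul,
      Complex.mul_cpow_ofReal_nonneg hn hT.le, Complex.ofReal_natCast]
    ring
  have hchi : ((π : ℂ) ^ (2 * (1 / 2 + Complex.I * t + ξ) - 1)) ^ 2 =
      (π : ℂ) ^ (4 * Complex.I * t) * ((π : ℂ) ^ ξ) ^ 4 := by
    rw [← Complex.cpow_nat_mul, ← Complex.cpow_nat_mul, ← Complex.cpow_add _ _ hpi0]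
    congr 1
    push_cast
    ring
  rw [chiFactor_eq, mul_pow, mul_pow, mul_pow, hε2, hchi, Rkernel, hpow,
    show 1 - (1 / 2 + Complex.I * t + ξ - Complex.I * κ) =
      1 / 2 - ξ - Complex.I * t + Complex.I * κ by ring,
    show 1 - (1 / 2 + Complex.I * t + ξ + Complex.I * κ) =
      1 / 2 - ξ - Complex.I * t - Complex.I * κ by ring,
    show 1 / 2 + Complex.I * t + ξ = 1 / 2 + ξ + Complex.I * t by ring]
  ring

theorem Rn_eq_integral (κ t γ : ℝ) {ε T : ℝ} (hε : ε = 1 ∨ ε = -1) (hT : 0 < T) (n : ℕ) :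
    Rn κ t ε γ T n = 1 / (2 * π * γ) *
      ∫ u : ℝ, (n : ℂ) ^ (-(γ / 2 : ℝ) + u * Complex.I : ℂ) *
        (chiFactor κ ε (1 / 2 + Complex.I * t + (-(γ / 2 : ℝ) + u * Complex.I)) ^ 2 *
          (T : ℂ) ^ (-(γ / 2 : ℝ) + u * Complex.I : ℂ) *
          Complex.Gamma ((-(γ / 2 : ℝ) + u * Complex.I) / γ)) := by
  simp_rw [← pi_cpow_mul_Rkernel κ t γ hε hT]
  rw [Rn, integral_mul_const, integral_const_mul]
  have hI := Complex.I_ne_zero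
  field_simp

theorem exists_norm_le_exp_of_polynomial_growth {H : ℂ → ℂ} {σ₁ σ₂ : ℝ}
    (h : ∃ A B : ℝ, 0 < A ∧ 0 < B ∧
      ∀ σ u : ℝ, σ₁ ≤ σ → σ ≤ σ₂ → ‖H (σ + u * Complex.I)‖ ≤ A * (1 + |u|) ^ B)
    {δ : ℝ} (hδ : 0 < δ) :
    ∃ C : ℝ, 0 < C ∧ ∀ s : ℂ, σ₁ ≤ s.re → s.re ≤ σ₂ → ‖H s‖ ≤ C * Real.exp (δ * |s.im|) := by
  obtain ⟨A, B, hA, hB, h⟩ := h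
  obtain ⟨D, hD, hexp⟩ := exists_one_add_rpow_le_exp hB hδ
  refine ⟨A * D, by positivity, fun s h1 h2 => ?_⟩
  have := h s.re s.im h1 h2
  rw [Complex.re_add_im] at this
  refine this.trans ?_
  rw [mul_assoc]
  gcongr
  exact hexp _ (abs_nonneg _)

/-- The exact identity combining (3.43), (3.45) and (3.46) in the proof of
Lemma 9 of Jutila–Motohashi: the smoothed sum of the coefficients of `H²`
equals the central value plus a dual sum. -/
theorem stmt_12 (κ t ε : ℝ) (hε : ε = 1 ∨ ε = -1) (γ T C₀ : ℝ)
    (hγ : 4 ≤ γ) (hT : 0 < T) (hC₀ : 0 < C₀)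
    (τ : ℕ → ℂ) (hτ : ∀ n : ℕ, 1 ≤ n → ‖τ n‖ ≤ C₀ * Real.sqrt n)
    (H : ℂ → ℂ) (hH : Differentiable ℂ H)
    (hgrowth : ∀ σ₁ σ₂ : ℝ, σ₁ < σ₂ → ∃ A B : ℝ, 0 < A ∧ 0 < B ∧
      ∀ σ u : ℝ, σ₁ ≤ σ → σ ≤ σ₂ → ‖H (σ + u * Complex.I)‖ ≤ A * (1 + |u|) ^ B)
    (hseries : ∀ s : ℂ, 2 < s.re →
      Summable (fun n : ℕ => ‖τ (n + 1) * ((n + 1 : ℕ) : ℂ) ^ (-s)‖) ∧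
      H s ^ 2 = ∑' n : ℕ, τ (n + 1) * ((n + 1 : ℕ) : ℂ) ^ (-s))
    (hfe : ∀ s : ℂ, s.re = 1 / 2 - γ / 2 →
      (∀ m : ℕ, (s + Complex.I * κ + (1 - (ε : ℂ)) / 2) / 2 ≠ -(m : ℂ)) →
      (∀ m : ℕ, (s - Complex.I * κ + (1 - (ε : ℂ)) / 2) / 2 ≠ -(m : ℂ)) →
      (∀ m : ℕ, (1 - s + Complex.I * κ + (1 - (ε : ℂ)) / 2) / 2 ≠ -(m : ℂ)) →
      (∀ m : ℕ, (1 - s - Complex.I * κ + (1 - (ε : ℂ)) / 2) / 2 ≠ -(m : ℂ)) →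
      H s = chiFactor κ ε s * H (1 - s)) :
    Summable (fun n : ℕ => ‖τ (n + 1) * ((n + 1 : ℕ) : ℂ) ^ (-(1 / 2 : ℂ) - Complex.I * t) *
        (Real.exp (-(((n + 1 : ℕ) : ℝ) / T) ^ γ) : ℂ)‖) ∧
    Summable (fun n : ℕ => ‖τ (n + 1) * ((n + 1 : ℕ) : ℂ) ^ (-(1 / 2 : ℂ) + Complex.I * t) *
        Rn κ t ε γ T (n + 1)‖) ∧
    ∑' n : ℕ, τ (n + 1) * ((n + 1 : ℕ) : ℂ) ^ (-(1 / 2 : ℂ) - Complex.I * t) *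
        (Real.exp (-(((n + 1 : ℕ) : ℝ) / T) ^ γ) : ℂ) =
      H (1 / 2 + Complex.I * t) ^ 2 +
        ∑' n : ℕ, τ (n + 1) * ((n + 1 : ℕ) : ℂ) ^ (-(1 / 2 : ℂ) + Complex.I * t) *
          Rn κ t ε γ T (n + 1) := by
  have hγ0 : 0 < γ := by linarith
  have hγc : (γ : ℂ) ≠ 0 := Complex.ofReal_ne_zero.mpr hγ0.ne'
  have hpi0 : (π : ℂ) ≠ 0 := Complex.ofReal_ne_zero.mpr Real.pi_ne_zero
  have hTc : (T : ℂ) ≠ 0 := Complex.ofReal_ne_zero.mpr hT.ne'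
  have hn0 : ∀ n : ℕ, ((n + 1 : ℕ) : ℂ) ≠ 0 := fun n => Nat.cast_ne_zero.mpr n.succ_ne_zero
  have hb : (-(γ / 2 : ℝ) : ℂ) = ((-(γ / 2) : ℝ) : ℂ) := by push_cast; ring
  set b : ℝ := -(γ / 2) with hb_def
  have hbγ : b / γ = -(1 / 2) := by rw [hb_def]; field_simp
  set s₀ : ℂ := 1 / 2 + Complex.I * t with hs₀
  have hs₀re : s₀.re = 1 / 2 := by rw [hs₀]; simp
  have hs₀im : s₀.im = t := by rw [hs₀]; simp
  have hTexp : ∀ z : ℂ, ‖(T : ℂ) ^ z‖ = T ^ z.re := Complex.norm_cpow_eq_rpow_re_of_pos hT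
  have hlineim : ∀ σ u : ℝ, ((σ : ℂ) + u * Complex.I).im = u := by simp
  have hlinere : ∀ σ u : ℝ, ((σ : ℂ) + u * Complex.I).re = σ := by simp
  have h1pi : (1 : ℝ) < π / 2 := by linarith [Real.pi_gt_three]
  -- the smoothing kernels on the two lines
  set K₁ : ℝ → ℂ := fun u => (T : ℂ) ^ (((2 : ℝ) : ℂ) + u * Complex.I) *
    Complex.Gamma ((((2 : ℝ) : ℂ) + u * Complex.I) / γ) with hK₁
  set K₂ : ℝ → ℂ := fun u => chiFactor κ ε (s₀ + (b + u * Complex.I)) ^ 2 *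
    (T : ℂ) ^ ((b : ℂ) + u * Complex.I) * Complex.Gamma (((b : ℂ) + u * Complex.I) / γ) with hK₂
  have hTcont : ∀ σ : ℝ, Continuous fun u : ℝ => (T : ℂ) ^ ((σ : ℂ) + u * Complex.I) := fun σ =>
    Continuous.const_cpow (by fun_prop) (Or.inl hTc)
  have hK₁int : Integrable K₁ :=
    (integrable_Gamma_vertical_div hγ0 two_pos).bdd_mul (c := T ^ (2 : ℝ))
      (hTcont 2).aestronglyMeasurable
      (Filter.Eventually.of_forall fun u => by rw [hTexp, hlinere])
  have hΓb : Continuous fun u : ℝ => Complex.Gamma (((b : ℂ) + u * Complex.I) / γ) :=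
    continuous_Gamma_vertical_div (by rw [hbγ]; norm_num) (by rw [hbγ]; norm_num)
  have hK₂int : Integrable K₂ := by
    obtain ⟨C₁, hC₁, hΓ⟩ := exists_norm_Gamma_le_of_re_eq (σ := -(1 / 2)) (θ := 1) le_rfl
      (by norm_num) zero_le_one h1pi
    obtain ⟨C₂, hC₂, hχ⟩ := exists_norm_chiFactor_le κ hε (σ := 1 / 2 + b) (by linarith)
      (δ := 1 / (4 * γ)) (by positivity)
      ((div_le_one (by positivity)).mpr (by linarith) |>.trans (by linarith))
    have hcont : Continuous fun u : ℝ => chiFactor κ ε (s₀ + (b + u * Complex.I)) := by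
      refine continuous_iff_continuousAt.mpr fun u => ?_
      exact ContinuousAt.comp (g := chiFactor κ ε) (f := fun u : ℝ => s₀ + (b + u * Complex.I))
        (continuousAt_chiFactor κ hε (by rw [Complex.add_re, hs₀re, hlinere]; linarith))
        (by fun_prop)
    refine integrable_of_norm_le_exp_neg_mul_abs (((hcont.pow 2).mul (hTcont b)).mul hΓb)
      (C := (C₂ * Real.exp (1 / (4 * γ) * |t|)) ^ 2 * T ^ b * C₁) (c := 1 / (2 * γ))
      (by positivity) fun u => ?_
    have h1 := hΓ (((b : ℂ) + u * Complex.I) / γ) (by rw [Complex.div_ofReal_re, hlinere, hbγ])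
    have h2 := hχ (s₀ + (b + u * Complex.I)) (by rw [Complex.add_re, hs₀re, hlinere])
    rw [Complex.div_ofReal_im, hlineim, abs_div, abs_of_pos hγ0] at h1
    rw [Complex.add_im, hs₀im, hlineim] at h2
    have h3 : ‖chiFactor κ ε (s₀ + (b + u * Complex.I))‖ ≤
        C₂ * Real.exp (1 / (4 * γ) * |t|) * Real.exp (1 / (4 * γ) * |u|) := by
      refine h2.trans ?_
      rw [mul_assoc, ← Real.exp_add, ← mul_add]
      gcongr
      exact abs_add_le t u
    rw [norm_mul, norm_mul, norm_pow, hTexp, hlinere]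
    calc _ ≤ (C₂ * Real.exp (1 / (4 * γ) * |t|) * Real.exp (1 / (4 * γ) * |u|)) ^ 2 * T ^ b *
          (C₁ * Real.exp (-1 * (|u| / γ))) := by gcongr
      _ = (C₂ * Real.exp (1 / (4 * γ) * |t|)) ^ 2 * T ^ b * C₁ *
          (Real.exp (1 / (4 * γ) * |u|) ^ 2 * Real.exp (-1 * (|u| / γ))) := by ring
      _ = _ := by
        rw [← Real.exp_nat_mul, ← Real.exp_add]
        congr 2
        push_cast
        field_simp
        ring
  -- the two Dirichlet series integrated termwise
  have hsumm : ∀ σ : ℝ, 2 < σ →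
      Summable fun n : ℕ => ‖τ (n + 1) * ((n + 1 : ℕ) : ℂ) ^ (-(σ : ℂ))‖ := fun σ hσ =>
    (hseries σ (by simpa using hσ)).1
  obtain ⟨hS₁, hT₁⟩ := tsum_integral_dirichlet_mul (hsumm (5 / 2) (by norm_num))
    (s := fun u : ℝ => s₀ + (((2 : ℝ) : ℂ) + u * Complex.I)) (by fun_prop)
    (fun u => by rw [Complex.add_re, hs₀re, hlinere]; norm_num) hK₁int
  obtain ⟨hS₂, hT₂⟩ := tsum_integral_dirichlet_mul (hsumm (1 / 2 - b) (by linarith))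
    (s := fun u : ℝ => 1 - (s₀ + ((b : ℂ) + u * Complex.I))) (by fun_prop)
    (fun u => by rw [Complex.sub_re, Complex.add_re, hs₀re, hlinere, Complex.one_re]; ring) hK₂int
  have hterm₁ : ∀ n : ℕ, τ (n + 1) * ((n + 1 : ℕ) : ℂ) ^ (-(1 / 2 : ℂ) - Complex.I * t) *
      (Real.exp (-(((n + 1 : ℕ) : ℝ) / T) ^ γ) : ℂ) = 1 / (2 * π * γ) *
      ∫ u : ℝ, τ (n + 1) * ((n + 1 : ℕ) : ℂ) ^ (-(s₀ + (((2 : ℝ) : ℂ) + u * Complex.I))) * K₁ u := by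
    intro n
    have hnpos : (0 : ℝ) < ((n + 1 : ℕ) : ℝ) := Nat.cast_pos.mpr n.succ_pos
    rw [exp_neg_rpow_eq_integral hγ0 two_pos (div_pos hnpos hT), mul_left_comm,
      ← integral_const_mul]
    congr 1
    refine integral_congr_ae (Filter.Eventually.of_forall fun u => ?_)
    have hdiv : (((((n + 1 : ℕ) : ℝ) / T : ℝ)) : ℂ) ^ (-(((2 : ℝ) : ℂ) + u * Complex.I)) =
        ((n + 1 : ℕ) : ℂ) ^ (-(((2 : ℝ) : ℂ) + u * Complex.I)) *
          (T : ℂ) ^ (((2 : ℝ) : ℂ) + u * Complex.I) := by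
      rw [div_eq_mul_inv, Complex.ofReal_mul,
        Complex.mul_cpow_ofReal_nonneg hnpos.le (inv_nonneg.mpr hT.le), Complex.ofReal_inv,
        Complex.inv_cpow _ _ (by rw [Complex.arg_ofReal_of_nonneg hT.le]; exact Real.pi_pos.ne),
        Complex.cpow_neg (T : ℂ), inv_inv, Complex.ofReal_natCast]
    simp only [hdiv, hK₁]
    rw [show -(s₀ + (((2 : ℝ) : ℂ) + u * Complex.I)) =
      (-(1 / 2 : ℂ) - Complex.I * t) + -(((2 : ℝ) : ℂ) + u * Complex.I) by rw [hs₀]; ring,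
      Complex.cpow_add _ _ (hn0 n)]
    ring
  have hterm₂ : ∀ n : ℕ, τ (n + 1) * ((n + 1 : ℕ) : ℂ) ^ (-(1 / 2 : ℂ) + Complex.I * t) *
      Rn κ t ε γ T (n + 1) = 1 / (2 * π * γ) *
      ∫ u : ℝ, τ (n + 1) * ((n + 1 : ℕ) : ℂ) ^ (-(1 - (s₀ + ((b : ℂ) + u * Complex.I)))) * K₂ u := by
    intro n
    rw [Rn_eq_integral κ t γ hε hT, mul_left_comm, ← integral_const_mul, hb]
    congr 1
    refine integral_congr_ae (Filter.Eventually.of_forall fun u => ?_)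
    have hpow : ((n + 1 : ℕ) : ℂ) ^ (-(1 - (s₀ + ((b : ℂ) + u * Complex.I)))) =
        ((n + 1 : ℕ) : ℂ) ^ (-(1 / 2 : ℂ) + Complex.I * t) *
          ((n + 1 : ℕ) : ℂ) ^ ((b : ℂ) + u * Complex.I) := by
      rw [← Complex.cpow_add _ _ (hn0 n)]
      congr 1
      rw [hs₀]
      ring
    simp only [hK₂, hpow, ← hs₀]
    ring
  -- the functional equation on the left line
  have hdual : ∫ u : ℝ, (∑' n : ℕ, τ (n + 1) *
      ((n + 1 : ℕ) : ℂ) ^ (-(1 - (s₀ + ((b : ℂ) + u * Complex.I))))) * K₂ u =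
      ∫ u : ℝ, H (s₀ + (b + u * Complex.I)) ^ 2 * (T : ℂ) ^ ((b : ℂ) + u * Complex.I) *
        Complex.Gamma (((b : ℂ) + u * Complex.I) / γ) := by
    refine integral_congr_ae ?_
    filter_upwards [(Set.toFinite {-t - κ, -t + κ}).countable.ae_notMem volume] with u hu
    simp only [Set.mem_insert_iff, Set.mem_singleton_iff, not_or] at hu
    set s : ℂ := s₀ + (b + u * Complex.I) with hs
    have hsre : s.re = 1 / 2 + b := by rw [hs, Complex.add_re, hs₀re, hlinere]
    have hsim : s.im = t + u := by rw [hs, Complex.add_im, hs₀im, hlineim]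
    have h1s : 2 < (1 - s).re := by rw [Complex.sub_re, hsre, Complex.one_re]; linarith
    have haim : ((1 - (ε : ℂ)) / 2).im = 0 := by
      rcases parity_eq_zero_or_one hε with h | h <;> rw [h] <;> simp
    have hare : 0 ≤ ((1 - (ε : ℂ)) / 2).re := by
      rcases parity_eq_zero_or_one hε with h | h <;> rw [h] <;> simp
    have him : ∀ z : ℂ, z.im ≠ 0 → ∀ m : ℕ, (z + (1 - (ε : ℂ)) / 2) / 2 ≠ -(m : ℂ) := by
      intro z hz m h
      have := congrArg Complex.im h
      rw [Complex.div_ofNat_im, Complex.add_im, haim] at this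
      simp only [add_zero, Complex.neg_im, Complex.natCast_im, neg_zero] at this
      exact hz (by linarith)
    have hre : ∀ z : ℂ, 0 < z.re → ∀ m : ℕ, (z + (1 - (ε : ℂ)) / 2) / 2 ≠ -(m : ℂ) := by
      intro z hz m h
      have := congrArg Complex.re h
      rw [Complex.div_ofNat_re, Complex.add_re] at this
      simp only [Complex.neg_re, Complex.natCast_re] at this
      have : (0 : ℝ) ≤ m := m.cast_nonneg
      linarith
    have hHs := hfe s (by rw [hsre, hb_def]; ring)
      (him _ fun h => hu.1 (by simp [hsim] at h; linarith))
      (him _ fun h => hu.2 (by simp [hsim] at h; linarith))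
      (hre _ (by simp only [Complex.add_re, Complex.I_mul_re, Complex.ofReal_im]; linarith))
      (hre _ (by rw [Complex.sub_re (1 - s), Complex.I_mul_re, Complex.ofReal_im]; linarith))
    rw [← (hseries (1 - s) h1s).2, hHs]
    simp only [hK₂, ← hs]
    ring
  have hprim : ∫ u : ℝ, (∑' n : ℕ, τ (n + 1) *
      ((n + 1 : ℕ) : ℂ) ^ (-(s₀ + (((2 : ℝ) : ℂ) + u * Complex.I)))) * K₁ u =
      ∫ u : ℝ, H (s₀ + (((2 : ℝ) : ℂ) + u * Complex.I)) ^ 2 *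
        (T : ℂ) ^ (((2 : ℝ) : ℂ) + u * Complex.I) *
        Complex.Gamma ((((2 : ℝ) : ℂ) + u * Complex.I) / γ) := by
    refine integral_congr_ae (Filter.Eventually.of_forall fun u => ?_)
    have hre : 2 < (s₀ + (((2 : ℝ) : ℂ) + u * Complex.I)).re := by
      rw [Complex.add_re, hs₀re, hlinere]; norm_num
    simp only [← (hseries _ hre).2, hK₁]
    ring
  -- moving the line of integration across the pole at the origin
  have hshift : (∫ u : ℝ, H (s₀ + (((2 : ℝ) : ℂ) + u * Complex.I)) ^ 2 *
        (T : ℂ) ^ (((2 : ℝ) : ℂ) + u * Complex.I) *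
        Complex.Gamma ((((2 : ℝ) : ℂ) + u * Complex.I) / γ)) -
      ∫ u : ℝ, H (s₀ + (b + u * Complex.I)) ^ 2 * (T : ℂ) ^ ((b : ℂ) + u * Complex.I) *
        Complex.Gamma (((b : ℂ) + u * Complex.I) / γ) = 2 * π * (γ * H s₀ ^ 2) := by
    set f : ℂ → ℂ := fun ξ => H (s₀ + ξ) ^ 2 * (T : ℂ) ^ ξ * (γ * Complex.Gamma (ξ / γ + 1))
      with hf
    have hfdiv : ∀ σ u : ℝ, σ ≠ 0 →
        H (s₀ + (σ + u * Complex.I)) ^ 2 * (T : ℂ) ^ ((σ : ℂ) + u * Complex.I) *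
          Complex.Gamma (((σ : ℂ) + u * Complex.I) / γ) =
        f (σ + u * Complex.I) / (σ + u * Complex.I) := by
      intro σ u hσ
      have hne : (σ : ℂ) + u * Complex.I ≠ 0 := fun h =>
        hσ (by simpa using congrArg Complex.re h)
      rw [hf]
      simp only
      rw [Complex.Gamma_add_one _ (div_ne_zero hne hγc)]
      field_simp
    have hdiff : DifferentiableOn ℂ f {z | -γ < z.re} := by
      intro z hz
      have hre : 0 < (z / γ + 1).re := by
        rw [Complex.add_re, Complex.div_ofReal_re, Complex.one_re, ← neg_lt_iff_pos_add,
          lt_div_iff₀ hγ0]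
        simpa using hz
      have hΓ : DifferentiableAt ℂ (fun ξ : ℂ => Complex.Gamma (ξ / γ + 1)) z :=
        DifferentiableAt.comp (g := Complex.Gamma) (f := fun ξ : ℂ => ξ / γ + 1) z
          (differentiableAt_Gamma_of_neg_one_lt_re (by linarith) hre.ne') (by fun_prop)
      have hHd : DifferentiableAt ℂ (fun ξ : ℂ => H (s₀ + ξ)) z :=
        (hH.comp (by fun_prop : Differentiable ℂ fun ξ : ℂ => s₀ + ξ)) z
      have hTd : DifferentiableAt ℂ (fun ξ : ℂ => (T : ℂ) ^ ξ) z :=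
        differentiableAt_id.const_cpow (Or.inl hTc)
      exact (((hHd.pow 2).mul hTd).mul (hΓ.const_mul _)).differentiableWithinAt
    obtain ⟨C, hC, hbound⟩ : ∃ C : ℝ, 0 < C ∧ ∀ z : ℂ, b ≤ z.re → z.re ≤ 2 →
        ‖f z‖ ≤ C * Real.exp (-(1 / (2 * γ)) * |z.im|) := by
      obtain ⟨C₁, hC₁, hΓ⟩ := exists_norm_Gamma_le_of_mem_strip 1 (θ := 1) zero_le_one h1pi
      obtain ⟨C₂, hC₂, hHb⟩ := exists_norm_le_exp_of_polynomial_growth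
        (hgrowth (1 / 2 + b) (1 / 2 + 2) (by linarith)) (δ := 1 / (4 * γ)) (by positivity)
      refine ⟨(C₂ * Real.exp (1 / (4 * γ) * |t|)) ^ 2 * Real.exp (|Real.log T| * γ) * (γ * C₁),
        by positivity, fun z hz1 hz2 => ?_⟩
      have hquot : -(1 / 2) ≤ z.re / γ ∧ z.re / γ ≤ 1 / 2 :=
        ⟨by rw [← hbγ]; gcongr, by rw [div_le_iff₀ hγ0]; linarith⟩
      have h1 := hΓ (z / γ + 1)
        (by rw [Complex.add_re, Complex.div_ofReal_re, Complex.one_re]; linarith)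
        (by rw [Complex.add_re, Complex.div_ofReal_re, Complex.one_re]; push_cast; linarith)
      rw [Complex.add_im, Complex.div_ofReal_im, Complex.one_im, add_zero, abs_div,
        abs_of_pos hγ0] at h1
      have h2 := hHb (s₀ + z) (by rw [Complex.add_re, hs₀re]; linarith)
        (by rw [Complex.add_re, hs₀re]; linarith)
      rw [Complex.add_im, hs₀im] at h2
      have h3 : ‖H (s₀ + z)‖ ≤
          C₂ * Real.exp (1 / (4 * γ) * |t|) * Real.exp (1 / (4 * γ) * |z.im|) := by
        refine h2.trans ?_
        rw [mul_assoc, ← Real.exp_add, ← mul_add]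
        gcongr
        exact abs_add_le t z.im
      have h4 : ‖(T : ℂ) ^ z‖ ≤ Real.exp (|Real.log T| * γ) := by
        rw [hTexp, Real.rpow_def_of_pos hT, Real.exp_le_exp]
        refine (le_abs_self _).trans ?_
        rw [abs_mul]
        gcongr
        exact abs_le.mpr ⟨by linarith, by linarith⟩
      rw [hf]
      simp only [norm_mul, norm_pow, Complex.norm_real, Real.norm_of_nonneg hγ0.le]
      calc _ ≤ (C₂ * Real.exp (1 / (4 * γ) * |t|) * Real.exp (1 / (4 * γ) * |z.im|)) ^ 2 *
            Real.exp (|Real.log T| * γ) * (γ * (C₁ * Real.exp (-1 * (|z.im| / γ)))) := by gcongr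
        _ = (C₂ * Real.exp (1 / (4 * γ) * |t|)) ^ 2 * Real.exp (|Real.log T| * γ) * (γ * C₁) *
            (Real.exp (1 / (4 * γ) * |z.im|) ^ 2 * Real.exp (-1 * (|z.im| / γ))) := by ring
        _ = _ := by
          rw [← Real.exp_nat_mul, ← Real.exp_add]
          congr 2
          push_cast
          field_simp
          ring
    have hint : ∀ σ : ℝ, b ≤ σ → σ ≤ 2 → σ ≠ 0 →
        Integrable fun u : ℝ => f (σ + u * Complex.I) / (σ + u * Complex.I) := by
      intro σ h1 h2 h0
      have hne : ∀ u : ℝ, (σ : ℂ) + u * Complex.I ≠ 0 := fun u h =>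
        h0 (by simpa using congrArg Complex.re h)
      have hcont : Continuous fun u : ℝ => f (σ + u * Complex.I) :=
        hdiff.continuousOn.comp_continuous (by fun_prop) fun u => by
          simp only [Set.mem_ofPred_eq, hlinere]; linarith
      refine integrable_of_norm_le_exp_neg_mul_abs (C := C / |σ|) (c := 1 / (2 * γ))
        (hcont.div (by fun_prop) hne) (by positivity) fun u => ?_
      have h3 := hbound (σ + u * Complex.I) (by rwa [hlinere]) (by rwa [hlinere])
      have h4 := Complex.abs_re_le_norm ((σ : ℂ) + u * Complex.I)
      rw [hlineim] at h3
      rw [hlinere] at h4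
      rw [norm_div, div_mul_eq_mul_div]
      have := abs_pos.mpr h0
      gcongr
    have hb0 : b < 0 := by linarith
    have hmain := integral_vertical_sub_integral_vertical (K := C) (by linarith : -γ < b) hb0
      two_pos hdiff (fun z h1 h2 => (hbound z h1 h2).trans ?_) (hint b le_rfl (by linarith) hb0.ne)
      (hint 2 (by linarith) le_rfl two_ne_zero)
    · simp_rw [hfdiv 2 _ two_ne_zero, hfdiv b _ hb0.ne]
      rw [hmain, hf]
      simp only [add_zero, Complex.cpow_zero, zero_div, zero_add, Complex.Gamma_one]
      ring
    · refine mul_le_of_le_one_right hC.le (Real.exp_le_one_iff.mpr ?_)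
      have : 0 ≤ 1 / (2 * γ) * |z.im| := by positivity
      linarith
  refine ⟨?_, ?_, ?_⟩
  · simp_rw [hterm₁, norm_mul (1 / (2 * π * γ) : ℂ)]
    exact hS₁.mul_left _
  · simp_rw [hterm₂, norm_mul (1 / (2 * π * γ) : ℂ)]
    exact hS₂.mul_left _
  · simp_rw [hterm₁, hterm₂]
    rw [tsum_mul_left, tsum_mul_left, hT₁, hT₂, hprim, hdual]
    have h2 : (2 * π * γ : ℂ) ≠ 0 := mul_ne_zero (mul_ne_zero two_ne_zero hpi0) hγc
    rw [sub_eq_iff_eq_add] at hshift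
    rw [hshift, mul_add]
    congr 1
    field_simp
end

section
/- For every ε₁ ∈ (0, 1/10) there exist constants C > 0 and K₀ > 0 with the following property. For all K ≥ K₀, all G with K^{ε₁} ≤ G ≤ K^{1−ε₁}, all t with 0 ≤ t ≤ K^{1/ε₁}, all κ ∈ ℝ with |κ − K| ≤ G, both choices ε ∈ {−1,1}, and all integers n ≥ 1, setting γ := (log K)², T := (K+t)(|K−t|+G)/(4π²) and a := (1−ε)/2, one has |R(n)| ≤ C (n/T)^{−γ/2}. -/
open MeasureTheory Real

/-- Weighted AM-GM for the squared distances of `w` and `w + 1` from the origin, compared with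
the squared distance of the intermediate point `w + δ`. -/
lemma norm_rpow_mul_norm_add_one_rpow_le {w : ℂ} {x δ : ℝ} (hx : 0 < x) (hw : x ≤ w.re)
    (hδ : 0 ≤ δ) (hδ' : δ ≤ 1) :
    ‖w‖ ^ (1 - δ) * ‖w + 1‖ ^ δ ≤ ‖w + δ‖ * exp (1 / (4 * x ^ 2)) := by
  have amgm := Real.geom_mean_le_arith_mean2_weighted (sub_nonneg.2 hδ') hδ
    (sq_nonneg ‖w‖) (sq_nonneg ‖w + 1‖) (by ring)
  have variance : (1 - δ) * ‖w‖ ^ 2 + δ * ‖w + 1‖ ^ 2 = ‖w + δ‖ ^ 2 + δ * (1 - δ) := by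
    simp only [Complex.sq_norm, Complex.normSq_apply, Complex.add_re, Complex.add_im,
      Complex.one_re, Complex.one_im, Complex.ofReal_re, Complex.ofReal_im]
    ring
  have hre : x ^ 2 ≤ ‖w + δ‖ ^ 2 := by
    have h : x ≤ ‖w + δ‖ :=
      (by simp; linarith : x ≤ (w + δ).re).trans (Complex.re_le_norm _)
    gcongr
  have hexp : 1 + 1 / (2 * x ^ 2) ≤ exp (1 / (2 * x ^ 2)) := by
    linarith [add_one_le_exp (1 / (2 * x ^ 2))]
  refine le_of_sq_le_sq ?_ (by positivity)
  calc (‖w‖ ^ (1 - δ) * ‖w + 1‖ ^ δ) ^ 2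
      = (‖w‖ ^ 2) ^ (1 - δ) * (‖w + 1‖ ^ 2) ^ δ := by
        rw [mul_pow, ← rpow_natCast, ← rpow_natCast, ← rpow_natCast, ← rpow_natCast,
          ← rpow_mul (norm_nonneg _), ← rpow_mul (norm_nonneg _), ← rpow_mul (norm_nonneg _),
          ← rpow_mul (norm_nonneg _), mul_comm (1 - δ), mul_comm δ]
    _ ≤ ‖w + δ‖ ^ 2 + δ * (1 - δ) := variance ▸ amgm
    _ ≤ ‖w + δ‖ ^ 2 * (1 + 1 / (2 * x ^ 2)) := by
        have : (1 : ℝ) / 2 ≤ ‖w + δ‖ ^ 2 * (1 / (2 * x ^ 2)) := by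
          rw [mul_one_div, le_div_iff₀ (by positivity)]
          linarith
        nlinarith [sq_nonneg (δ - 1 / 2)]
    _ ≤ ‖w + δ‖ ^ 2 * exp (1 / (2 * x ^ 2)) := by gcongr
    _ = (‖w + δ‖ * exp (1 / (4 * x ^ 2))) ^ 2 := by
        rw [mul_pow, ← exp_nat_mul]
        congr 2
        push_cast
        field_simp
        norm_num

lemma prod_norm_add_natCast_le {b : ℂ} {δ : ℝ} (hb : 1 ≤ b.re) (hδ : 0 ≤ δ) (hδ' : δ ≤ 1)
    (n : ℕ) :
    (∏ j ∈ Finset.range n, ‖b + j‖) * ‖b + n‖ ^ δ ≤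
      ‖b‖ ^ δ * exp (1 - 1 / (n + 1)) * ∏ j ∈ Finset.range n, ‖b + δ + j‖ := by
  induction n with
  | zero => simp
  | succ n ih =>
    have hn : (n + 1 : ℝ) ≤ (b + n).re := by simp; linarith
    have step := norm_rpow_mul_norm_add_one_rpow_le (by positivity) hn hδ hδ'
    have hpos : 0 < ‖b + n‖ :=
      (by positivity : (0 : ℝ) < n + 1).trans_le (hn.trans (Complex.re_le_norm _))
    have hexp : exp (1 - 1 / ((n : ℝ) + 1)) * exp (1 / (4 * ((n : ℝ) + 1) ^ 2)) ≤
        exp (1 - 1 / ((n : ℝ) + 1 + 1)) := by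
      rw [← exp_add, exp_le_exp]
      have : 1 / ((n : ℝ) + 1) - 1 / ((n : ℝ) + 1 + 1) - 1 / (4 * ((n : ℝ) + 1) ^ 2) =
          (3 * n + 2) / (4 * ((n : ℝ) + 1) ^ 2 * (n + 1 + 1)) := by
        field_simp
        ring
      have : 0 ≤ (3 * n + 2) / (4 * ((n : ℝ) + 1) ^ 2 * (n + 1 + 1)) := by positivity
      linarith
    rw [Finset.prod_range_succ, Finset.prod_range_succ]
    push_cast
    calc (∏ j ∈ Finset.range n, ‖b + j‖) * ‖b + n‖ * ‖b + (n + 1)‖ ^ δ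
        = ((∏ j ∈ Finset.range n, ‖b + j‖) * ‖b + n‖ ^ δ) *
            (‖b + n‖ ^ (1 - δ) * ‖b + n + 1‖ ^ δ) := by
          rw [rpow_sub hpos, rpow_one, add_assoc]
          field_simp
      _ ≤ (‖b‖ ^ δ * exp (1 - 1 / (n + 1)) * ∏ j ∈ Finset.range n, ‖b + δ + j‖) *
            (‖b + n + δ‖ * exp (1 / (4 * ((n : ℝ) + 1) ^ 2))) := by gcongr
      _ = ‖b‖ ^ δ * (exp (1 - 1 / (n + 1)) * exp (1 / (4 * ((n : ℝ) + 1) ^ 2))) *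
            ((∏ j ∈ Finset.range n, ‖b + δ + j‖) * ‖b + δ + n‖) := by
          rw [add_right_comm b]
          ring
      _ ≤ _ := by gcongr

lemma norm_Gamma_add_le {b : ℂ} {δ : ℝ} (hb : 1 ≤ b.re) (hδ : 0 ≤ δ) (hδ' : δ ≤ 1) :
    ‖Complex.Gamma (b + δ)‖ ≤ exp 1 * ‖b‖ ^ δ * ‖Complex.Gamma b‖ := by
  refine le_of_tendsto_of_tendsto (Complex.GammaSeq_tendsto_Gamma (b + δ)).norm
    ((Complex.GammaSeq_tendsto_Gamma b).norm.const_mul (exp 1 * ‖b‖ ^ δ)) ?_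
  filter_upwards [Filter.eventually_gt_atTop 0] with n hn
  have hn' : (0 : ℝ) < n := by exact_mod_cast hn
  have hne (c : ℂ) (hc : 1 ≤ c.re) (j : ℕ) : 0 < ‖c + j‖ :=
    lt_of_lt_of_le (by simp; positivity) (Complex.re_le_norm (c + j))
  have hP : 0 < ∏ j ∈ Finset.range (n + 1), ‖b + j‖ := Finset.prod_pos fun j _ ↦ hne b hb j
  have hQ : 0 < ∏ j ∈ Finset.range (n + 1), ‖b + δ + j‖ :=
    Finset.prod_pos fun j _ ↦ hne (b + δ) (by simp; linarith) j
  have hpow (s : ℂ) : ‖(n : ℂ) ^ s‖ = (n : ℝ) ^ s.re := by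
    simpa using Complex.norm_cpow_eq_rpow_re_of_pos hn' s
  have hnb : (n : ℝ) ^ δ ≤ ‖b + (n + 1 : ℕ)‖ ^ δ := by
    refine rpow_le_rpow hn'.le ?_ hδ
    refine le_trans ?_ (Complex.re_le_norm _)
    simp
    linarith
  have key : (n : ℝ) ^ δ * ∏ j ∈ Finset.range (n + 1), ‖b + j‖ ≤
      exp 1 * ‖b‖ ^ δ * ∏ j ∈ Finset.range (n + 1), ‖b + δ + j‖ := by
    calc _ ≤ ‖b + (n + 1 : ℕ)‖ ^ δ * ∏ j ∈ Finset.range (n + 1), ‖b + j‖ := by gcongr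
      _ ≤ _ := by
        rw [mul_comm]
        refine (prod_norm_add_natCast_le hb hδ hδ' (n + 1)).trans ?_
        rw [mul_comm (exp 1)]
        gcongr
        exact sub_le_self _ (by positivity)
  simp only [Complex.GammaSeq, norm_div, norm_mul, norm_prod, hpow]
  rw [Complex.add_re, Complex.ofReal_re, rpow_add hn', mul_div_assoc', div_le_div_iff₀ hQ hP]
  have := mul_le_mul_of_nonneg_left key
    (by positivity : 0 ≤ (n : ℝ) ^ b.re * ‖(n.factorial : ℂ)‖)
  linarith

lemma norm_Gamma_add_natCast_le {w : ℂ} {B : ℝ} (hw : 0 < w.re) (N : ℕ)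
    (hB : ∀ j < N, ‖w + j‖ ≤ B) :
    ‖Complex.Gamma (w + N)‖ ≤ B ^ N * ‖Complex.Gamma w‖ := by
  induction N with
  | zero => simp
  | succ N ih =>
    have hBN := hB N N.lt_succ_self
    have hne : w + N ≠ 0 := fun h ↦ by
      have := congrArg Complex.re h
      simp at this
      linarith [(N.cast_nonneg : (0 : ℝ) ≤ N)]
    rw [Nat.cast_succ, ← add_assoc, Complex.Gamma_add_one _ hne, norm_mul, pow_succ', mul_assoc]
    exact mul_le_mul hBN (ih fun j hj ↦ hB j (hj.trans N.lt_succ_self)) (norm_nonneg _)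
      ((norm_nonneg _).trans hBN)

lemma norm_Gamma_inv_le {z : ℂ} {B : ℝ} (M : ℕ) (hB : ∀ j < M, ‖z + j‖ ≤ B) :
    ‖(Complex.Gamma z)⁻¹‖ ≤ B ^ M * ‖(Complex.Gamma (z + M))⁻¹‖ := by
  induction M with
  | zero => simp
  | succ M ih =>
    have hBM := hB M M.lt_succ_self
    have hB0 : 0 ≤ B := (norm_nonneg _).trans hBM
    refine (ih fun j hj ↦ hB j (hj.trans M.lt_succ_self)).trans ?_
    rw [Complex.one_div_Gamma_eq_self_mul_one_div_Gamma_add_one (z + M), norm_mul, pow_succ,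
      mul_assoc, Nat.cast_succ, ← add_assoc]
    gcongr

/-- Stirling-type bound, with an absolute constant, for a quotient of Gamma values at points
placed symmetrically about the line `Re = c`. -/
lemma norm_Gamma_div_Gamma_le {c σ v : ℝ} (hc : 0 ≤ c) (hc' : c ≤ 1) (hσ : 4 ≤ σ) :
    ‖Complex.Gamma ((c + σ / 2 : ℝ) + v * Complex.I) /
      Complex.Gamma ((c - σ / 2 : ℝ) + v * Complex.I)‖ ≤
      exp 1 * (1 + σ / 2 + |v|) ^ σ := by
  set z : ℂ := (c - σ / 2 : ℝ) + v * Complex.I with hz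
  set B : ℝ := 1 + σ / 2 + |v| with hBdef
  set M : ℕ := ⌈1 - c + σ / 2⌉₊
  set N : ℕ := ⌊σ - M⌋₊
  set δ : ℝ := σ - M - N with hδdef
  have hM : 1 - c + σ / 2 ≤ M := Nat.le_ceil _
  have hM' : (M : ℝ) < 1 - c + σ / 2 + 1 := Nat.ceil_lt_add_one (by linarith)
  have hN : (N : ℝ) ≤ σ - M := Nat.floor_le (by linarith)
  have hN' : σ - M < N + 1 := Nat.lt_floor_add_one _
  have hB : 0 < B := by positivity
  have hzB (x : ℝ) (hx : 0 ≤ x) (hx' : x ≤ σ) : ‖z + x‖ ≤ B := by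
    refine (Complex.norm_le_abs_re_add_abs_im _).trans ?_
    have : |(z + x).re| ≤ 1 + σ / 2 := by
      rw [abs_le]
      constructor <;> simp [hz] <;> linarith
    have him : (z + x).im = v := by simp [hz]
    rw [him]
    linarith
  have hb : 1 ≤ (z + M).re := by simp [hz]; linarith
  have hinv := norm_Gamma_inv_le (z := z) (B := B) M fun j hj ↦ by
    have : (j : ℝ) < M := by exact_mod_cast hj
    simpa using hzB j j.cast_nonneg (by linarith)
  have hδ := norm_Gamma_add_le (b := z + M) (δ := δ) hb (by linarith) (by linarith)
  have hbB : ‖z + M‖ ≤ B := by simpa using hzB M M.cast_nonneg (by linarith)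
  have hshift := norm_Gamma_add_natCast_le (w := z + M + δ) (B := B)
    (by simp at hb ⊢; linarith) N fun j hj ↦ by
      have : (j : ℝ) < N := by exact_mod_cast hj
      have h := hzB (M + δ + j) (by linarith [(j.cast_nonneg : (0 : ℝ) ≤ j)]) (by linarith)
      push_cast at h
      simpa only [add_assoc] using h
  have hend : ((c + σ / 2 : ℝ) : ℂ) + v * Complex.I = z + M + δ + N := by
    rw [hz, hδdef]
    push_cast
    ring
  have hG : 0 < ‖Complex.Gamma (z + M)‖ :=
    norm_pos_iff.2 (Complex.Gamma_ne_zero_of_re_pos (by linarith))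
  rw [hend, div_eq_mul_inv, norm_mul]
  calc _ ≤ (B ^ N * (exp 1 * ‖z + M‖ ^ δ * ‖Complex.Gamma (z + M)‖)) *
        (B ^ M * ‖(Complex.Gamma (z + M))⁻¹‖) := by
        gcongr
        exact hshift.trans (by gcongr)
    _ = exp 1 * (B ^ N * B ^ M * ‖z + M‖ ^ δ) := by
        rw [norm_inv]
        field_simp
    _ ≤ exp 1 * (B ^ N * B ^ M * B ^ δ) := by
        have : 0 ≤ δ := by linarith
        gcongr
    _ = exp 1 * B ^ σ := by
        rw [← rpow_natCast, ← rpow_natCast, ← rpow_add hB, ← rpow_add hB, hδdef]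
        ring_nf

lemma norm_Gamma_half_sq (v : ℝ) :
    ‖Complex.Gamma (1 / 2 + v * Complex.I)‖ ^ 2 = π / cosh (π * v) := by
  have h := Complex.Gamma_mul_Gamma_one_sub (1 / 2 + v * Complex.I)
  have hconj : (1 : ℂ) - (1 / 2 + v * Complex.I) =
      (starRingEnd ℂ) (1 / 2 + v * Complex.I) := by
    rw [map_add, map_mul, map_div₀, map_one, Complex.conj_ofNat, Complex.conj_ofReal,
      Complex.conj_I]
    ring
  have hsin : Complex.sin (π * (1 / 2 + v * Complex.I)) = Complex.cosh (π * v) := by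
    rw [← Complex.cos_mul_I, ← Complex.sin_add_pi_div_two]
    ring_nf
  rw [hconj, Complex.Gamma_conj, Complex.mul_conj', hsin] at h
  exact_mod_cast h

lemma norm_Gamma_neg_half_le (v : ℝ) :
    ‖Complex.Gamma (-(1 / 2) + v * Complex.I)‖ ≤ 6 * exp (-|v|) := by
  have hne : (-(1 / 2) + v * Complex.I : ℂ) ≠ 0 := fun h ↦ by
    have := congrArg Complex.re h
    norm_num at this
  have hrec := Complex.Gamma_add_one _ hne
  have hhalf : (1 / 2 : ℝ) ≤ ‖(-(1 / 2) + v * Complex.I : ℂ)‖ := by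
    refine le_trans ?_ (Complex.abs_re_le_norm _)
    norm_num
  rw [show -(1 / 2) + v * Complex.I + 1 = 1 / 2 + v * Complex.I by ring] at hrec
  have hle : ‖Complex.Gamma (-(1 / 2) + v * Complex.I)‖ ≤
      2 * ‖Complex.Gamma (1 / 2 + v * Complex.I)‖ := by
    rw [hrec, norm_mul]
    nlinarith [norm_nonneg (Complex.Gamma (-(1 / 2) + v * Complex.I))]
  have hcosh : exp (2 * |v|) / 2 ≤ cosh (π * v) := by
    rw [← cosh_abs, cosh_eq, abs_mul, abs_of_pos pi_pos]
    have : exp (2 * |v|) ≤ exp (π * |v|) := by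
      gcongr
      exact two_le_pi
    linarith [exp_pos (-(π * |v|))]
  have hsq : ‖Complex.Gamma (1 / 2 + v * Complex.I)‖ ^ 2 ≤ (3 * exp (-|v|)) ^ 2 := by
    rw [norm_Gamma_half_sq, div_le_iff₀ (cosh_pos _)]
    calc π ≤ 9 / 2 := by linarith [pi_le_four]
      _ = (3 * exp (-|v|)) ^ 2 * (exp (2 * |v|) / 2) := by
        rw [mul_pow, ← exp_nat_mul, mul_div_assoc', mul_assoc, ← exp_add]
        norm_num
      _ ≤ _ := by gcongr
  linarith [le_of_sq_le_sq hsq (by positivity)]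

lemma norm_Gamma_div_Gamma_conj_le {c σ v : ℝ} (hc : 0 ≤ c) (hc' : c ≤ 1) (hσ : 4 ≤ σ) :
    ‖Complex.Gamma ((c + σ / 2 : ℝ) + v * Complex.I) /
      Complex.Gamma ((c - σ / 2 : ℝ) - v * Complex.I)‖ ≤
      exp 1 * (1 + σ / 2 + |v|) ^ σ := by
  have hconj : ((c - σ / 2 : ℝ) : ℂ) - v * Complex.I =
      (starRingEnd ℂ) ((c - σ / 2 : ℝ) + v * Complex.I) := by
    rw [map_add, map_mul, Complex.conj_ofReal, Complex.conj_ofReal, Complex.conj_I]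
    ring
  rw [hconj, Complex.Gamma_conj, norm_div, RCLike.norm_conj, ← norm_div]
  exact norm_Gamma_div_Gamma_le hc hc' hσ

lemma one_add_rpow_le {P σ d y : ℝ} (hP : 0 < P) (hσ : 0 ≤ σ) (hy : |y| ≤ P + d) :
    (1 + σ / 2 + |y / 2|) ^ σ ≤ (P / 2) ^ σ * exp (σ * ((2 + σ + d) / P)) := by
  have hexp := add_one_le_exp ((2 + σ + d) / P)
  calc (1 + σ / 2 + |y / 2|) ^ σ ≤ (P / 2 * exp ((2 + σ + d) / P)) ^ σ := by
        refine rpow_le_rpow (by positivity) ?_ hσ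
        calc 1 + σ / 2 + |y / 2| ≤ P / 2 * ((2 + σ + d) / P + 1) := by
              rw [abs_div, abs_two]
              field_simp
              linarith
          _ ≤ _ := by gcongr
    _ = _ := by
        rw [mul_rpow (by positivity) (exp_pos _).le, ← exp_mul, mul_comm σ]

lemma norm_Rkernel_le {κ t ε γ P Q d : ℝ} (hε : ε = 1 ∨ ε = -1) (hγ : 8 ≤ γ)
    (hP : |κ - t| ≤ P) (hQ : |κ + t| ≤ Q + d) (hPγ : 4 * γ ^ 2 ≤ P) (hQγ : 4 * γ ^ 2 ≤ Q)
    (hQd : 4 * γ * d ≤ Q) {n : ℕ} (hn : 1 ≤ n) (u : ℝ) :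
    ‖Rkernel κ t ε γ (Q * P / (4 * π ^ 2)) n (-(γ / 2 : ℝ) + u * Complex.I)‖ ≤
      6 * exp 5 * ((n : ℝ) / (Q * P / (4 * π ^ 2))) ^ (-γ / 2) * exp (-(1 / (2 * γ)) * |u|) := by
  have hP0 : 0 < P := by nlinarith
  have hQ0 : 0 < Q := by nlinarith
  have hn0 : (0 : ℝ) < n := by exact_mod_cast hn
  have hγ0 : 0 < γ := by linarith
  set T := Q * P / (4 * π ^ 2) with hT
  have hT0 : 0 < T := by positivity
  set σ := γ / 2 with hσdef
  set c : ℝ := (1 / 2 + (1 - ε) / 2) / 2 with hcdef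
  have hc : 0 ≤ c := by rcases hε with rfl | rfl <;> norm_num [hcdef]
  have hc' : c ≤ 1 := by rcases hε with rfl | rfl <;> norm_num [hcdef]
  have hσ : 4 ≤ σ := by linarith
  have h₁ := (norm_Gamma_div_Gamma_conj_le (v := (κ - t - u) / 2) hc hc' hσ).trans
    (mul_le_mul_of_nonneg_left (one_add_rpow_le (d := |u|) hP0 (by linarith)
      ((abs_sub _ _).trans (by linarith))) (exp_pos 1).le)
  have h₂ := (norm_Gamma_div_Gamma_conj_le (v := -(κ + t + u) / 2) hc hc' hσ).trans
    (mul_le_mul_of_nonneg_left (one_add_rpow_le (P := Q) (d := d + |u|) hQ0 (by linarith)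
      (by rw [abs_neg]; exact (abs_add_le _ _).trans (by linarith))) (exp_pos 1).le)
  have h₃ := norm_Gamma_neg_half_le (u / γ)
  have h₄ := Complex.norm_cpow_eq_rpow_re_of_pos (by positivity : 0 < π ^ 4 * n * T)
    (-(σ : ℝ) + u * Complex.I)
  have hre : (-(σ : ℝ) + u * Complex.I : ℂ).re = -σ := by simp
  rw [hre] at h₄
  have e₁ : (-(σ : ℝ) + u * Complex.I : ℂ) / γ = -(1 / 2) + (u / γ : ℝ) * Complex.I := by
    have : (γ : ℂ) ≠ 0 := by exact_mod_cast hγ0.ne'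
    rw [hσdef]
    push_cast
    field_simp
  have hexp : exp (σ * ((2 + σ + |u|) / P)) ^ 2 * exp (σ * ((2 + σ + (d + |u|)) / Q)) ^ 2 *
      exp (-|u / γ|) ≤ exp 1 * exp (-(1 / (2 * γ)) * |u|) := by
    rw [← exp_nat_mul, ← exp_nat_mul, ← exp_add, ← exp_add, ← exp_add, exp_le_exp, abs_div,
      abs_of_pos hγ0]
    have hγu : γ * |u| = 4 * γ ^ 2 * (|u| / (4 * γ)) := by field_simp
    have hb₁ : γ * (2 + σ + |u|) / P ≤ 1 / 4 + |u| / (4 * γ) := by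
      rw [div_le_iff₀ hP0]
      have : 4 * γ ^ 2 * (|u| / (4 * γ)) ≤ P * (|u| / (4 * γ)) := by gcongr
      nlinarith
    have hb₂ : γ * (2 + σ + (d + |u|)) / Q ≤ 1 / 2 + |u| / (4 * γ) := by
      rw [div_le_iff₀ hQ0]
      have : 4 * γ ^ 2 * (|u| / (4 * γ)) ≤ Q * (|u| / (4 * γ)) := by gcongr
      nlinarith
    have e : -(1 / (2 * γ)) * |u| = 2 * (|u| / (4 * γ)) - |u| / γ := by
      field_simp
      ring
    have e' : 2 * (σ * ((2 + σ + |u|) / P)) = γ * (2 + σ + |u|) / P := by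
      rw [hσdef]
      ring
    have e'' : 2 * (σ * ((2 + σ + (d + |u|)) / Q)) = γ * (2 + σ + (d + |u|)) / Q := by
      rw [hσdef]
      ring
    push_cast
    rw [e, e', e'']
    linarith
  have hmain : ((P / 2) ^ σ) ^ 2 * ((Q / 2) ^ σ) ^ 2 * (π ^ 4 * n * T) ^ (-σ) =
      ((n : ℝ) / T) ^ (-γ / 2) := by
    rw [← mul_pow, ← mul_rpow (by positivity) (by positivity), ← rpow_natCast,
      ← rpow_mul (by positivity), mul_comm σ, rpow_mul (by positivity), rpow_neg (by positivity),
      ← div_eq_mul_inv, ← div_rpow (by positivity) (by positivity), neg_div, rpow_neg (by positivity),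
      ← inv_rpow (by positivity), ← hσdef]
    congr 1
    rw [hT]
    field_simp
    norm_cast
    ring
  unfold Rkernel
  rw [norm_mul, norm_mul, norm_mul, norm_pow, norm_pow, h₄, e₁]
  calc _ ≤ (exp 1 * ((P / 2) ^ σ * exp (σ * ((2 + σ + |u|) / P)))) ^ 2 *
        (exp 1 * ((Q / 2) ^ σ * exp (σ * ((2 + σ + (d + |u|)) / Q)))) ^ 2 *
        (π ^ 4 * n * T) ^ (-σ) * (6 * exp (-|u / γ|)) := by
        gcongr
        · convert h₁ using 3 <;> congr 1 <;> push_cast [hcdef] <;> ring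
        · convert h₂ using 3 <;> congr 1 <;> push_cast [hcdef] <;> ring
    _ = 6 * exp 1 ^ 4 * (((P / 2) ^ σ) ^ 2 * ((Q / 2) ^ σ) ^ 2 * (π ^ 4 * n * T) ^ (-σ)) *
        (exp (σ * ((2 + σ + |u|) / P)) ^ 2 * exp (σ * ((2 + σ + (d + |u|)) / Q)) ^ 2 *
          exp (-|u / γ|)) := by ring
    _ ≤ 6 * exp 1 ^ 4 * ((n : ℝ) / T) ^ (-γ / 2) * (exp 1 * exp (-(1 / (2 * γ)) * |u|)) := by
        rw [hmain]
        gcongr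
    _ = 6 * (exp 1 ^ 4 * exp 1) * ((n : ℝ) / T) ^ (-γ / 2) * exp (-(1 / (2 * γ)) * |u|) := by
        ring
    _ = _ := by
        rw [← exp_nat_mul, ← exp_add]
        norm_num

lemma integral_exp_neg_mul_abs {b : ℝ} (hb : 0 < b) : ∫ u : ℝ, exp (-b * |u|) = 2 / b := by
  rw [integral_comp_abs (f := fun x ↦ exp (-b * x)), integral_exp_mul_Ioi (neg_lt_zero.2 hb)]
  simp
  ring

lemma norm_Rn_le {κ t ε γ T A : ℝ} {n : ℕ} (hγ : 0 < γ)
    (h : ∀ u : ℝ, ‖Rkernel κ t ε γ T n (-(γ / 2 : ℝ) + u * Complex.I)‖ ≤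
      A * exp (-(1 / (2 * γ)) * |u|)) :
    ‖Rn κ t ε γ T n‖ ≤ 2 * A / π := by
  have hint := integral_exp_neg_mul_abs (by positivity : 0 < 1 / (2 * γ))
  have hintegrable : Integrable fun u : ℝ ↦ exp (-(1 / (2 * γ)) * |u|) :=
    .of_integral_ne_zero (by rw [hint]; positivity)
  have hle := norm_integral_le_of_norm_le (hintegrable.const_mul A)
    (f := fun u : ℝ ↦ Rkernel κ t ε γ T n (-(γ / 2 : ℝ) + u * Complex.I) * Complex.I)
    (.of_forall fun u ↦ by simpa using h u)
  rw [integral_const_mul, hint] at hle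
  have hpow : ‖(π : ℂ) ^ (4 * Complex.I * t)‖ = 1 := by
    rw [Complex.norm_cpow_eq_rpow_re_of_pos pi_pos]
    simp
  rw [Rn, norm_mul, norm_div, hpow]
  simp only [norm_mul, Complex.norm_I, Complex.norm_real, Complex.norm_two, norm_eq_abs,
    abs_of_pos pi_pos, abs_of_pos hγ, mul_one]
  calc _ ≤ 1 / (2 * π * γ) * (A * (2 / (1 / (2 * γ)))) := by gcongr
    _ = _ := by
      field_simp

lemma eventually_log_pow_four_le_rpow {s : ℝ} (hs : 0 < s) :
    ∀ᶠ K : ℝ in Filter.atTop, 1 ≤ K ∧ 8 ≤ log K ^ 2 ∧ 4 * (log K ^ 2) ^ 2 ≤ K ^ s := by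
  filter_upwards [Filter.eventually_ge_atTop 1, tendsto_log_atTop.eventually_ge_atTop 3,
    (isLittleO_log_rpow_rpow_atTop 4 hs).bound (by norm_num : (0 : ℝ) < 1 / 4)] with K hK hlog hO
  refine ⟨hK, by nlinarith, ?_⟩
  rw [norm_of_nonneg (by positivity), norm_of_nonneg (by positivity)] at hO
  have : log K ^ (4 : ℝ) = (log K ^ 2) ^ 2 := by
    rw [← pow_mul]
    exact_mod_cast rpow_natCast (log K) 4
  rw [this] at hO
  linarith

/-- The bound (3.47)–(3.48) in the proof of Lemma 9 of Jutila–Motohashi: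
with `γ = (log K)²` and `T = (K+t)(|K−t|+G)/(4π²)`, one has
`|R(n)| ≤ C (n/T)^{−γ/2}` uniformly in the stated ranges. -/
theorem stmt_13 (ε₁ : ℝ) (hε₁ : 0 < ε₁) (hε₁' : ε₁ < 1 / 10) :
    ∃ C K₀ : ℝ, 0 < C ∧ 0 < K₀ ∧
      ∀ K G t κ ε : ℝ, K₀ ≤ K → K ^ ε₁ ≤ G → G ≤ K ^ (1 - ε₁) →
        0 ≤ t → t ≤ K ^ (1 / ε₁) → |κ - K| ≤ G → (ε = 1 ∨ ε = -1) →
        ∀ n : ℕ, 1 ≤ n →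
          ‖Rn κ t ε ((Real.log K) ^ 2) ((K + t) * (|K - t| + G) / (4 * π ^ 2)) n‖ ≤
            C * ((n : ℝ) / ((K + t) * (|K - t| + G) / (4 * π ^ 2))) ^
              (-(Real.log K) ^ 2 / 2) := by
  obtain ⟨K₀, hK₀⟩ := Filter.eventually_atTop.1 (eventually_log_pow_four_le_rpow hε₁)
  refine ⟨12 * exp 5, max K₀ 1, by positivity, by positivity, ?_⟩
  intro K G t κ ε hK hG hG' ht _ hκ hε n hn
  obtain ⟨hK1, hγ, hγK⟩ := hK₀ K ((le_max_left _ _).trans hK)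
  set γ := log K ^ 2 with hγdef
  have hK0 : 0 < K := by linarith
  have hKs : K ^ ε₁ ≤ K := by
    simpa using rpow_le_rpow_of_exponent_le hK1 (by linarith : ε₁ ≤ 1)
  have hG0 : 0 < G := (rpow_pos_of_pos hK0 _).trans_le hG
  have hγG : 4 * γ * G ≤ K :=
    calc 4 * γ * G ≤ K ^ ε₁ * K ^ (1 - ε₁) := by
          have : 4 * γ ≤ K ^ ε₁ := by nlinarith
          gcongr
      _ = K := by rw [← rpow_add hK0]; simp
  have hP : |κ - t| ≤ |K - t| + G := by linarith [abs_sub_le κ K t]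
  have hQ : |κ + t| ≤ K + t + G := by
    rw [abs_le] at hκ ⊢
    constructor <;> linarith
  refine (norm_Rn_le (by linarith) (norm_Rkernel_le hε hγ hP hQ
    (by linarith [abs_nonneg (K - t)]) (by linarith) (by linarith) hn)).trans ?_
  rw [div_le_iff₀ pi_pos]
  have hnn : 0 ≤ 12 * exp 5 *
      ((n : ℝ) / ((K + t) * (|K - t| + G) / (4 * π ^ 2))) ^ (-γ / 2) := by positivity
  nlinarith [two_le_pi]
end
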